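/- arXiv:2510.13484 — 2 statements merged into one kernel-verified Lean document; each statement's English description precedes it below -/
import Mathlib

section
/- Let n ≥ 4. Then rank(PORD_n) = n² − n + 1. -/
/-!
Partial transformations on the chain X_n = {1 < 2 < ... < n}, encoded as
functions `ℕ → Option ℕ` (with `none` meaning "undefined"), composed
left-to-right: `x(αβ) = (xα)β`.
-/

namespace OrientedPT

noncomputable section
open scoped Classical

/-- A partial transformation, as a partial map on `ℕ`. -/
def PTrans : Type := ℕ → Option ℕ

instance : Mul PTrans := ⟨fun f g x => (f x).bind g⟩

theorem mul_apply (f g : PTrans) (x : ℕ) : (f * g) x = (f x).bind g := rfl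

instance : Semigroup PTrans where
  mul_assoc f g h := by
    funext x
    show ((f x).bind g).bind h = (f x).bind (fun y => (g y).bind h)
    cases f x <;> rfl

/-- The domain of a partial transformation. -/
def domSet (f : PTrans) : Set ℕ := {x | f x ≠ none}

/-- The image of a partial transformation. -/
def im (f : PTrans) : Set ℕ := {y | ∃ x, f x = some y}

/-- The set of fixed points: `fix(α) = {x ∈ dom α : xα = x}`. -/
def fixSet (f : PTrans) : Set ℕ := {x | f x = some x}

/-- The value of `f` at `x` (defaulting to `0` off the domain). -/
def val (f : PTrans) (x : ℕ) : ℕ := (f x).getD 0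

/-- `f` is a partial transformation on `X_n = {1,…,n}`. -/
def IsPT (n : ℕ) (f : PTrans) : Prop :=
  domSet f ⊆ Set.Icc 1 n ∧ im f ⊆ Set.Icc 1 n

/-- Order-decreasing: `xα ≤ x` for all `x ∈ dom α`. -/
def OrderDecr (f : PTrans) : Prop := ∀ x y, f x = some y → y ≤ x

/-- Order-preserving. -/
def OrderPres (f : PTrans) : Prop :=
  ∀ x y u v, f x = some u → f y = some v → x ≤ y → u ≤ v

/-- Order-reversing. -/
def OrderRev (f : PTrans) : Prop :=
  ∀ x y u v, f x = some u → f y = some v → x ≤ y → v ≤ u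

/-- Monotone: order-preserving or order-reversing. -/
def IsMonotone (f : PTrans) : Prop := OrderPres f ∨ OrderRev f

/-- Injectivity of a partial transformation. -/
def Inj (f : PTrans) : Prop := ∀ x y z, f x = some z → f y = some z → x = y

/-- The cyclic successor of `a` in the set `D`: the least element of `D`
above `a` if there is one, and otherwise the least element of `D`. -/
def cycSucc (D : Set ℕ) (a : ℕ) : ℕ :=
  if {x ∈ D | a < x}.Nonempty then sInf {x ∈ D | a < x} else sInf D

/-- The cyclic descents of `f`: those `a ∈ dom f` whose cyclic successor in
`dom f` has a strictly smaller value. Writing `dom f = {x₁ < ⋯ < x_t}` these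
are exactly the indices `1 ≤ i ≤ t` with `x_{i+1}α < x_iα` (where `x_{t+1} = x₁`). -/
def descents (f : PTrans) : Set ℕ :=
  {a ∈ domSet f | val f (cycSucc (domSet f) a) < val f a}

/-- The cyclic ascents of `f`. -/
def ascents (f : PTrans) : Set ℕ :=
  {a ∈ domSet f | val f a < val f (cycSucc (domSet f) a)}

/-- Orientation-preserving: at most one cyclic descent. -/
def OrientPres (f : PTrans) : Prop := (descents f).ncard ≤ 1

/-- Orientation-reversing: at most one cyclic ascent. -/
def OrientRev (f : PTrans) : Prop := (ascents f).ncard ≤ 1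

/-- Oriented: orientation-preserving or orientation-reversing. -/
def Oriented (f : PTrans) : Prop := OrientPres f ∨ OrientRev f

/-- `PORD n`: all oriented and order-decreasing partial transformations on `X_n`. -/
def PORD (n : ℕ) : Set PTrans := {f | IsPT n f ∧ Oriented f ∧ OrderDecr f}

/-- `PORD(n,r) = {α ∈ PORD_n : |im α| ≤ r}`. -/
def PORDr (n r : ℕ) : Set PTrans := {f ∈ PORD n | (im f).ncard ≤ r}

/-- `POPD n`: the orientation-preserving elements of `PORD n`. -/
def POPD (n : ℕ) : Set PTrans := {f ∈ PORD n | OrientPres f}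

/-- `PORD_n^* = PORD_n \ POPD_n`. -/
def PORDstar (n : ℕ) : Set PTrans := PORD n \ POPD n

/-- `PMD n`: monotone and order-decreasing partial transformations on `X_n`. -/
def PMD (n : ℕ) : Set PTrans := {f | IsPT n f ∧ IsMonotone f ∧ OrderDecr f}

/-- `PRD_n^* = PORD_n^* \ PMD_n`. -/
def PRDstar (n : ℕ) : Set PTrans := PORDstar n \ PMD n

/-- `IORD n`: the injective elements of `PORD n`. -/
def IORD (n : ℕ) : Set PTrans := {f ∈ PORD n | Inj f}

/-- `IORD(n,r) = {α ∈ IORD_n : |im α| ≤ r}`. -/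
def IORDr (n r : ℕ) : Set PTrans := {f ∈ IORD n | (im f).ncard ≤ r}

/-- `A` is a generating set of `S`: `A ⊆ S` and the smallest subsemigroup
containing `A` is `S`. -/
def IsGenSet (S A : Set PTrans) : Prop :=
  A ⊆ S ∧ (Subsemigroup.closure A : Set PTrans) = S

/-- A minimal generating set: a generating set of minimum cardinality. -/
def IsMinGenSet (S A : Set PTrans) : Prop :=
  IsGenSet S A ∧ ∀ B : Set PTrans, IsGenSet S B → A.ncard ≤ B.ncard

/-- The rank of `S`: the minimum cardinality of a generating set of `S`. -/
def rank (S : Set PTrans) : ℕ :=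
  sInf {k | ∃ A : Set PTrans, IsGenSet S A ∧ A.ncard = k}

/-- `z` is undecomposable in `S`: `z = xy` with `x, y ∈ S` forces `z = x` or `z = y`. -/
def Undecomposable (S : Set PTrans) (z : PTrans) : Prop :=
  ∀ x ∈ S, ∀ y ∈ S, z = x * y → z = x ∨ z = y

/-- `T` is a subsemigroup of (the semigroup given by the subset) `S`. -/
def IsSubsemigroupOf (T S : Set PTrans) : Prop :=
  T ⊆ S ∧ ∀ a ∈ T, ∀ b ∈ T, a * b ∈ T

/-- `T` is a maximal subsemigroup of `S`: a maximal element, under inclusion,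
of the family of proper subsemigroups of `S`. -/
def IsMaximalSubsemigroup (S T : Set PTrans) : Prop :=
  IsSubsemigroupOf T S ∧ T ≠ S ∧
    ∀ U : Set PTrans, IsSubsemigroupOf U S → U ≠ S → T ⊆ U → T = U

/-- The restriction of `f` to `Y`. -/
def restrict (f : PTrans) (Y : Set ℕ) : PTrans :=
  fun x => if x ∈ Y then f x else none

/-- The partial identity `1_Y` on `Y`. -/
def partialId (Y : Set ℕ) : PTrans := fun x => if x ∈ Y then some x else none

/-- `ξ_{p,q}`: domain `[p, q+1]`, fixes every point of `[p,q]`, maps `q+1` to `p`. -/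
def xi (p q : ℕ) : PTrans := fun x =>
  if p ≤ x ∧ x ≤ q then some x else if x = q + 1 then some p else none

/-- `γ_{p,q}` (for `1 ≤ p ≤ q−2 ≤ n−2`): with `k = min(p−1, q−p−1)` and
`l = min(q−p−1, n−q)`, it has domain `[p, p+k] ∪ [q, q+l]` and maps
`p+i ↦ p−i` and `q+j ↦ q−j`. -/
def gamma (n p q : ℕ) : PTrans := fun x =>
  if p ≤ x ∧ x ≤ p + min (p - 1) (q - p - 1) then some (2 * p - x)
  else if q ≤ x ∧ x ≤ q + min (q - p - 1) (n - q) then some (2 * q - x)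
  else none

/-- `γ_{p,q}^{r,s}`: with `u = min(r−s, q−p, n−q+1)`, it has domain
`[p, p+s−1] ∪ [q, q+u−1]` and maps `p+i ↦ p−i` and `q+j ↦ q−j`. -/
def gammaRS (n r p q s : ℕ) : PTrans := fun x =>
  if p ≤ x ∧ x + 1 ≤ p + s then some (2 * p - x)
  else if q ≤ x ∧ x + 1 ≤ q + min (r - s) (min (q - p) (n - q + 1)) then some (2 * q - x)
  else none

/-- `δ^a_Y`: domain `Y ∪ {a}`, fixes every point of `Y`, maps `a` to `a−1`. -/
def deltaMap (a : ℕ) (Y : Set ℕ) : PTrans :=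
  fun x => if x ∈ Y then some x else if x = a then some (a - 1) else none

/-- `ζ_Z`: with `a = max Z` and `b = min Z`, domain `Z ∪ {a+1}`, fixes every
point of `Z`, maps `a+1` to `b−1`. -/
def zetaMap (Z : Set ℕ) : PTrans :=
  fun x => if x ∈ Z then some x else if x = sSup Z + 1 then some (sInf Z - 1) else none

/-- `E_r`: the idempotents of `PORD_n` with image of size exactly `r`. -/
def Eset (n r : ℕ) : Set PTrans := {f ∈ PORD n | f * f = f ∧ (im f).ncard = r}

/-- `F_r = {ξ_{p,q}^r : 1 ≤ p ≤ n−2, p+1 ≤ q ≤ p+r−2 ≤ n−1}`. -/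
def Fset (n r : ℕ) : Set PTrans :=
  {f | ∃ p q : ℕ, 1 ≤ p ∧ p + 2 ≤ n ∧ p + 1 ≤ q ∧ q + 2 ≤ p + r ∧ p + r ≤ n + 1 ∧
    f = xi p q}

/-- `G_n = {γ_{p,q} : 1 ≤ p ≤ q−2 ≤ n−2} \ {γ_{1,n}}`. -/
def Gset (n : ℕ) : Set PTrans :=
  {f | ∃ p q : ℕ, 1 ≤ p ∧ p + 2 ≤ q ∧ q ≤ n ∧ f = gamma n p q} \ {gamma n 1 n}

/-- `H_n^r = {γ_{p,q}^{r,s} : 1 ≤ p ≤ q−2 ≤ n−2, 1 ≤ s ≤ min{p, q−p, r−1}, (q,s) ≠ (n,1)}`. -/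
def Hset (n r : ℕ) : Set PTrans :=
  {f | ∃ p q s : ℕ, 1 ≤ p ∧ p + 2 ≤ q ∧ q ≤ n ∧ 1 ≤ s ∧
    s ≤ min p (min (q - p) (r - 1)) ∧ ¬(q = n ∧ s = 1) ∧ f = gammaRS n r p q s}

/-- `EI_r = {1_Y : Y ⊆ X_n, |Y| = r}`. -/
def EIset (n r : ℕ) : Set PTrans :=
  {f | ∃ Y : Set ℕ, Y ⊆ Set.Icc 1 n ∧ Y.ncard = r ∧ f = partialId Y}

/-- `FI_r = {δ^a_Y : 2 ≤ a ≤ n, Y ⊆ X_n \ {a−1,a}, |Y| = r−1}`. -/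
def FIset (n r : ℕ) : Set PTrans :=
  {f | ∃ (a : ℕ) (Y : Set ℕ), 2 ≤ a ∧ a ≤ n ∧ Y ⊆ Set.Icc 1 n \ {a - 1, a} ∧
    Y.ncard = r - 1 ∧ f = deltaMap a Y}

/-- `GI_k = {ζ_Z : Z ⊆ X_n \ {1,n}, |Z| = k−1}`. -/
def GIset (n k : ℕ) : Set PTrans :=
  {f | ∃ Z : Set ℕ, Z ⊆ Set.Icc 1 n \ {1, n} ∧ Z.ncard = k - 1 ∧ f = zetaMap Z}

/-- `GI_k^c`: those `ζ_Z ∈ GI_k` with `Z` a convex subset (an interval). -/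
def GIcset (n k : ℕ) : Set PTrans :=
  {f | ∃ Z : Set ℕ, Z ⊆ Set.Icc 1 n \ {1, n} ∧ Z.ncard = k - 1 ∧ Z.OrdConnected ∧
    f = zetaMap Z}

/-- `F^r_{p,q} = {α ∈ PORD(n,r) : α restricted to [p, q+1] equals ξ_{p,q}^r}`. -/
def Frestr (n r p q : ℕ) : Set PTrans :=
  {f ∈ PORDr n r | restrict f (Set.Icc p (q + 1)) = xi p q}

/-- `G_{p,q} = {α ∈ PORD^*(n,r) : α restricted to dom(γ_{p,q}) equals γ_{p,q}}`. -/
def Grestr (n r p q : ℕ) : Set PTrans :=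
  {f ∈ PORDr n r ∩ PORDstar n | restrict f (domSet (gamma n p q)) = gamma n p q}

/-- `H^{r,s}_{p,q} = {α ∈ PORD^*(n,r) : α restricted to dom(γ^{r,s}_{p,q}) equals γ^{r,s}_{p,q}}`. -/
def Hrestr (n r p q s : ℕ) : Set PTrans :=
  {f ∈ PORDr n r ∩ PORDstar n |
    restrict f (domSet (gammaRS n r p q s)) = gammaRS n r p q s}

end

end OrientedPT

/-!
Write `POD` for the order-preserving order-decreasing maps. Raising by one the value of the largest
moved point until every point is fixed writes a map of `POD` as a product of maps `δ` and partial
identities. Let `f` be a map of `PORD` whose first point goes to `a` and whose last point `M` goes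
to `b`. If `a < b`, then `f` is in `POD` or reverses the order on two blocks, and in the latter
case `f = β γ h` with `β` and `h` in `POD`. If `b ≤ a`, then either `f` is in `POD`, or
`f = 1_{dom f} ξ_{b,M-1} g` for a map `g` of `PORD` with a smaller last point.

For the lower bound, every nonempty prime set (one whose complement is closed under products) meets
every generating set. Being order-decreasing, the factors of a map fix its fixed points; this makes
the singletons of the near-identity generators and the sets of extensions of the other `ξ` and `γ`
prime. They are pairwise disjoint: the elements of a set of the second kind move some point down by
at least two, and their fixed points determine the index of the set.
-/

namespace OrientedPT

/-! ### Cyclic chains -/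

section CyclicChains

variable {α : Type*} {r : α → α → Prop} {a b c d : α}

/-- The cyclic sequence `a, b, c, d` is an `r`-chain when read from a suitable starting point. -/
def CycChain (r : α → α → Prop) (a b c d : α) : Prop :=
  (r a b ∧ r b c ∧ r c d) ∨ (r b c ∧ r c d ∧ r d a) ∨ (r c d ∧ r d a ∧ r a b) ∨
    (r d a ∧ r a b ∧ r b c)

theorem CycChain.rotate (h : CycChain r a b c d) : CycChain r b c d a := by
  unfold CycChain at *
  tauto

theorem cycChain_swap : CycChain (Function.swap r) d c b a ↔ CycChain r a b c d := by
  unfold CycChain Function.swap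
  tauto

end CyclicChains

section CyclicSuccessor

variable {D : Set ℕ} {a b u v : ℕ}

theorem cycSucc_of_lt (hb : b ∈ D) (hab : a < b) :
    cycSucc D a ∈ D ∧ a < cycSucc D a ∧ cycSucc D a ≤ b := by
  have hne : {x ∈ D | a < x}.Nonempty := ⟨b, hb, hab⟩
  rw [cycSucc, if_pos hne]
  exact ⟨(Nat.sInf_mem hne).1, (Nat.sInf_mem hne).2, Nat.sInf_le ⟨hb, hab⟩⟩

theorem cycSucc_of_forall_le (h : ∀ x ∈ D, x ≤ a) : cycSucc D a = sInf D := by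
  rw [cycSucc, if_neg]
  rintro ⟨x, hx, hax⟩
  exact (h x hx).not_gt hax

variable {α : Type*} {r : α → α → Prop} {F : ℕ → α}

theorem rel_cycSucc_of_forall_cycChain
    (h : ∀ w ∈ D, ∀ x ∈ D, ∀ y ∈ D, ∀ z ∈ D, w ≤ x → x ≤ y → y ≤ z →
      CycChain r (F w) (F x) (F y) (F z))
    (ha : a ∈ D) (hb : b ∈ D) (hab : a < b) :
    r (F a) (F (cycSucc D a)) ∨ r (F b) (F (cycSucc D b)) := by
  obtain ⟨ha', haa', hab'⟩ := cycSucc_of_lt hb hab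
  by_cases hmax : ∀ x ∈ D, x ≤ b
  · have hchain := h _ (Nat.sInf_mem ⟨a, ha⟩) a ha _ ha' b hb (Nat.sInf_le ha) haa'.le hab'
    rw [← cycSucc_of_forall_le hmax] at hchain
    unfold CycChain at hchain
    tauto
  · push Not at hmax
    obtain ⟨c, hc, hbc⟩ := hmax
    obtain ⟨hb', hbb', -⟩ := cycSucc_of_lt hc hbc
    have hchain := h a ha _ ha' b hb _ hb' haa'.le hab' hbb'.le
    unfold CycChain at hchain
    tauto

variable [IsPreorder α r]

theorem rel_of_forall_rel_cycSucc (hu : u ∈ D) (hv : v ∈ D) (huv : u ≤ v)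
    (h : ∀ a ∈ D, u ≤ a → a < v → r (F a) (F (cycSucc D a))) : r (F u) (F v) := by
  induction hk : v - u using Nat.strong_induction_on generalizing u with
  | _ k ih =>
    rcases huv.eq_or_lt with rfl | huv
    · exact refl_of r _
    · obtain ⟨hs, hus, hsv⟩ := cycSucc_of_lt hv huv
      exact trans_of r (h u hu le_rfl huv) <|
        ih _ (by omega) hs hsv (fun a ha hsa hav => h a ha (hus.le.trans hsa) hav) rfl

theorem rel_of_forall_rel_cycSucc_outside (hD : D.Finite) (hu : u ∈ D) (hv : v ∈ D)
    (h : ∀ a ∈ D, v ≤ a ∨ a < u → r (F a) (F (cycSucc D a))) : r (F v) (F u) := by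
  obtain ⟨M, hM, hmax⟩ := Set.exists_max_image D id hD ⟨u, hu⟩
  have hvM : r (F v) (F M) :=
    rel_of_forall_rel_cycSucc hv hM (hmax v hv) fun a ha hva _ => h a ha (Or.inl hva)
  have hMm : r (F M) (F (sInf D)) :=
    cycSucc_of_forall_le hmax ▸ h M hM (Or.inl (hmax v hv))
  have hmu : r (F (sInf D)) (F u) :=
    rel_of_forall_rel_cycSucc (Nat.sInf_mem ⟨u, hu⟩) hu (Nat.sInf_le hu)
      fun a ha _ hau => h a ha (Or.inr hau)
  exact trans_of r hvM (trans_of r hMm hmu)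

theorem cycChain_of_forall_ne (hD : D.Finite) {d : ℕ}
    (h : ∀ a ∈ D, a ≠ d → r (F a) (F (cycSucc D a))) {w x y z : ℕ} (hw : w ∈ D) (hx : x ∈ D)
    (hy : y ∈ D) (hz : z ∈ D) (hwx : w ≤ x) (hxy : x ≤ y) (hyz : y ≤ z) :
    CycChain r (F w) (F x) (F y) (F z) := by
  have between {u v : ℕ} (hu : u ∈ D) (hv : v ∈ D) (huv : u ≤ v) (hd : d < u ∨ v ≤ d) :
      r (F u) (F v) :=
    rel_of_forall_rel_cycSucc hu hv huv fun a ha _ _ => h a ha (by omega)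
  have around (hd : w ≤ d ∧ d < z) : r (F z) (F w) :=
    rel_of_forall_rel_cycSucc_outside hD hw hz fun a ha _ => h a ha (by omega)
  have hwx' := between hw hx hwx
  have hxy' := between hx hy hxy
  have hyz' := between hy hz hyz
  obtain hd | hd | hd | hd :
      (d < w ∨ z ≤ d) ∨ (w ≤ d ∧ d < x) ∨ (x ≤ d ∧ d < y) ∨ (y ≤ d ∧ d < z) := by omega
  · exact Or.inl ⟨hwx' (by omega), hxy' (by omega), hyz' (by omega)⟩
  · exact Or.inr (Or.inl ⟨hxy' (by omega), hyz' (by omega), around (by omega)⟩)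
  · exact Or.inr (Or.inr (Or.inl ⟨hyz' (by omega), around (by omega), hwx' (by omega)⟩))
  · exact Or.inr (Or.inr (Or.inr ⟨around (by omega), hwx' (by omega), hxy' (by omega)⟩))

theorem ncard_not_rel_cycSucc_le_one_iff (hD : D.Finite) :
    {a ∈ D | ¬ r (F a) (F (cycSucc D a))}.ncard ≤ 1 ↔
      ∀ w ∈ D, ∀ x ∈ D, ∀ y ∈ D, ∀ z ∈ D, w ≤ x → x ≤ y → y ≤ z →
        CycChain r (F w) (F x) (F y) (F z) := by
  have hfin := hD.subset (Set.sep_subset D fun a => ¬ r (F a) (F (cycSucc D a)))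
  refine ⟨fun h w hw x hx y hy z hz => ?_, fun h => ?_⟩
  · obtain ⟨d, hd⟩ := (Set.ncard_le_one_iff_subset_singleton hfin).1 h
    refine cycChain_of_forall_ne hD (d := d) (fun a ha had => ?_) hw hx hy hz
    by_contra hdesc
    exact had (hd ⟨ha, hdesc⟩)
  · refine (Set.ncard_le_one hfin).2 fun a ha b hb => ?_
    by_contra hne
    rcases Nat.lt_or_gt_of_ne hne with hab | hab
    · exact (rel_cycSucc_of_forall_cycChain h ha.1 hb.1 hab).elim ha.2 hb.2
    · exact (rel_cycSucc_of_forall_cycChain h hb.1 ha.1 hab).elim hb.2 ha.2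

end CyclicSuccessor

/-! ### Oriented order-decreasing maps -/

section Basic

variable {f g : PTrans} {n x y z : ℕ}

theorem ext_eq_some (h : ∀ x y, f x = some y ↔ g x = some y) : f = g :=
  funext fun x => Option.ext (h x)

theorem mul_eq_some_iff : (f * g) x = some z ↔ ∃ y, f x = some y ∧ g y = some z :=
  Option.bind_eq_some_iff

theorem val_eq_of_eq_some (h : f x = some y) : val f x = y := by
  rw [val, h, Option.getD_some]

theorem eq_some_val (h : x ∈ domSet f) : f x = some (val f x) := by
  obtain ⟨y, hy⟩ := Option.ne_none_iff_exists'.1 h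
  rw [val_eq_of_eq_some hy, hy]

theorem mem_domSet_of_eq_some (h : f x = some y) : x ∈ domSet f :=
  Option.ne_none_iff_exists'.2 ⟨y, h⟩

/-- `f` is an order-decreasing partial transformation of `{1, …, n}`. -/
def DecrOn (n : ℕ) (f : PTrans) : Prop :=
  ∀ x y, f x = some y → 1 ≤ y ∧ y ≤ x ∧ x ≤ n

theorem decrOn_iff : DecrOn n f ↔ IsPT n f ∧ OrderDecr f := by
  refine ⟨fun h => ⟨⟨fun x hx => ?_, ?_⟩, fun x y hxy => (h x y hxy).2.1⟩, ?_⟩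
  · have := h x _ (eq_some_val hx)
    exact ⟨by omega, by omega⟩
  · rintro y ⟨x, hxy⟩
    have := h x y hxy
    exact ⟨by omega, by omega⟩
  · rintro ⟨⟨hdom, him⟩, hdecr⟩ x y hxy
    exact ⟨(him ⟨x, hxy⟩).1, hdecr x y hxy, (hdom (mem_domSet_of_eq_some hxy)).2⟩

theorem DecrOn.domSet_subset (hf : DecrOn n f) : domSet f ⊆ Set.Icc 1 n :=
  (decrOn_iff.1 hf).1.1

theorem DecrOn.mul (hf : DecrOn n f) (hg : DecrOn n g) : DecrOn n (f * g) := by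
  intro x z hxz
  obtain ⟨y, hxy, hyz⟩ := mul_eq_some_iff.1 hxz
  have := hf x y hxy
  have := hg y z hyz
  omega

end Basic

section CycMonotone

variable {r s : ℕ → ℕ → Prop} {f g : PTrans} {n : ℕ}

/-- `f` maps increasing sequences of points of its domain to cyclic `r`-chains: `f` is
orientation-preserving for `r = (· ≤ ·)` and orientation-reversing for `r = (· ≥ ·)`. Sequences
of length four suffice, since four points detect two cyclic descents. -/
def CycMonotone (r : ℕ → ℕ → Prop) (f : PTrans) : Prop :=
  ∀ ⦃w x y z a b c d : ℕ⦄, w ≤ x → x ≤ y → y ≤ z →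
    f w = some a → f x = some b → f y = some c → f z = some d → CycChain r a b c d

theorem ncard_not_rel_val_le_one_iff [IsPreorder ℕ r] (hf : (domSet f).Finite) :
    {a ∈ domSet f | ¬ r (val f a) (val f (cycSucc (domSet f) a))}.ncard ≤ 1 ↔
      CycMonotone r f := by
  rw [ncard_not_rel_cycSucc_le_one_iff hf]
  constructor
  · intro h w x y z a b c d hwx hxy hyz ha hb hc hd
    have := h w (mem_domSet_of_eq_some ha) x (mem_domSet_of_eq_some hb)
      y (mem_domSet_of_eq_some hc) z (mem_domSet_of_eq_some hd) hwx hxy hyz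
    rwa [val_eq_of_eq_some ha, val_eq_of_eq_some hb, val_eq_of_eq_some hc,
      val_eq_of_eq_some hd] at this
  · intro h w hw x hx y hy z hz hwx hxy hyz
    exact h hwx hxy hyz (eq_some_val hw) (eq_some_val hx) (eq_some_val hy) (eq_some_val hz)

theorem orientPres_iff (hf : (domSet f).Finite) : OrientPres f ↔ CycMonotone (· ≤ ·) f := by
  rw [← ncard_not_rel_val_le_one_iff hf, OrientPres, descents]
  simp only [not_le]

theorem orientRev_iff (hf : (domSet f).Finite) : OrientRev f ↔ CycMonotone (· ≥ ·) f := by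
  rw [← ncard_not_rel_val_le_one_iff hf, OrientRev, ascents]
  simp only [ge_iff_le, not_le]

theorem mem_PORD_iff :
    f ∈ PORD n ↔ DecrOn n f ∧ (CycMonotone (· ≤ ·) f ∨ CycMonotone (· ≥ ·) f) := by
  have horiented (hf : DecrOn n f) :
      Oriented f ↔ CycMonotone (· ≤ ·) f ∨ CycMonotone (· ≥ ·) f := by
    have hfin := (Set.finite_Icc 1 n).subset hf.domSet_subset
    rw [Oriented, orientPres_iff hfin, orientRev_iff hfin]
  rw [← and_congr_right horiented, decrOn_iff]
  change IsPT n f ∧ Oriented f ∧ OrderDecr f ↔ _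
  tauto

theorem OrderPres.cycMonotone (hf : OrderPres f) : CycMonotone (· ≤ ·) f :=
  fun _ _ _ _ _ _ _ _ hwx hxy hyz ha hb hc hd =>
    Or.inl ⟨hf _ _ _ _ ha hb hwx, hf _ _ _ _ hb hc hxy, hf _ _ _ _ hc hd hyz⟩

theorem CycMonotone.map_cycChain (hg : CycMonotone s g) {a b c d a' b' c' d' : ℕ}
    (h : CycChain (· ≤ ·) a b c d) (ha : g a = some a') (hb : g b = some b')
    (hc : g c = some c') (hd : g d = some d') : CycChain s a' b' c' d' := by
  rcases h with ⟨h₁, h₂, h₃⟩ | ⟨h₁, h₂, h₃⟩ | ⟨h₁, h₂, h₃⟩ | ⟨h₁, h₂, h₃⟩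
  · exact hg h₁ h₂ h₃ ha hb hc hd
  · exact (hg h₁ h₂ h₃ hb hc hd ha).rotate.rotate.rotate
  · exact (hg h₁ h₂ h₃ hc hd ha hb).rotate.rotate
  · exact (hg h₁ h₂ h₃ hd ha hb hc).rotate

theorem CycMonotone.mul (hf : CycMonotone (· ≤ ·) f) (hg : CycMonotone s g) :
    CycMonotone s (f * g) := by
  intro w x y z a b c d hwx hxy hyz ha hb hc hd
  obtain ⟨_, ha, ha'⟩ := mul_eq_some_iff.1 ha
  obtain ⟨_, hb, hb'⟩ := mul_eq_some_iff.1 hb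
  obtain ⟨_, hc, hc'⟩ := mul_eq_some_iff.1 hc
  obtain ⟨_, hd, hd'⟩ := mul_eq_some_iff.1 hd
  exact hg.map_cycChain (hf hwx hxy hyz ha hb hc hd) ha' hb' hc' hd'

theorem CycMonotone.mul_swap (hf : CycMonotone (· ≥ ·) f) (hg : CycMonotone s g) :
    CycMonotone (Function.swap s) (f * g) := by
  intro w x y z a b c d hwx hxy hyz ha hb hc hd
  obtain ⟨_, ha, ha'⟩ := mul_eq_some_iff.1 ha
  obtain ⟨_, hb, hb'⟩ := mul_eq_some_iff.1 hb
  obtain ⟨_, hc, hc'⟩ := mul_eq_some_iff.1 hc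
  obtain ⟨_, hd, hd'⟩ := mul_eq_some_iff.1 hd
  exact cycChain_swap.2 <|
    hg.map_cycChain (cycChain_swap.1 (hf hwx hxy hyz ha hb hc hd)) hd' hc' hb' ha'

theorem mul_mem_PORD (hf : f ∈ PORD n) (hg : g ∈ PORD n) : f * g ∈ PORD n := by
  rw [mem_PORD_iff] at *
  refine ⟨hf.1.mul hg.1, ?_⟩
  rcases hf.2 with hf' | hf' <;> rcases hg.2 with hg' | hg'
  · exact Or.inl (hf'.mul hg')
  · exact Or.inr (hf'.mul hg')
  · exact Or.inr (hf'.mul_swap hg')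
  · exact Or.inl (hf'.mul_swap hg')

theorem finite_PORD (n : ℕ) : (PORD n).Finite := by
  let graph (f : PTrans) : Set (ℕ × ℕ) := {p | f p.1 = some p.2}
  let box : Set (ℕ × ℕ) := Set.Icc 1 n ×ˢ Set.Icc 1 n
  have hbox : box.Finite := (Set.finite_Icc 1 n).prod (Set.finite_Icc 1 n)
  have hgraph : Set.MapsTo graph (PORD n) {s | s ⊆ box} := by
    intro f hf p hp
    have := (mem_PORD_iff.1 hf).1 p.1 p.2 hp
    exact ⟨⟨by omega, by omega⟩, by omega, by omega⟩
  refine hbox.finite_subsets.of_injOn hgraph fun f _ g _ hfg => ?_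
  exact ext_eq_some fun x y => Set.ext_iff.1 hfg (x, y)

end CycMonotone

/-! ### Prime blocks and the rank -/

section Rank

variable {M : Type*} [Mul M]

/-- `B` is prime in `S`: a product of two elements of `S` lies in `B` only if a factor does. -/
def IsPrimeIn (S B : Set M) : Prop :=
  ∀ x ∈ S, ∀ y ∈ S, x * y ∈ B → x ∈ B ∨ y ∈ B

theorem IsPrimeIn.inter_nonempty {A B : Set M} (hB : IsPrimeIn (Subsemigroup.closure A : Set M) B)
    {z : M} (hz : z ∈ Subsemigroup.closure A) (hzB : z ∈ B) : (A ∩ B).Nonempty := by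
  induction hz using Subsemigroup.closure_induction with
  | mem x hx => exact ⟨x, hx, hzB⟩
  | mul x y hx hy ihx ihy => exact (hB x hx y hy hzB).elim ihx ihy

theorem Undecomposable.isPrimeIn_singleton {S : Set PTrans} {z : PTrans}
    (hz : Undecomposable S z) : IsPrimeIn S {z} := by
  intro x hx y hy hxy
  exact (hz x hx y hy hxy.symm).imp Eq.symm Eq.symm

theorem rank_eq_card {S : Set PTrans} (hS : S.Finite) {ι : Type*} {I : Finset ι} {g : ι → PTrans}
    (hgen : IsGenSet S (g '' I)) {B : ι → Set PTrans} (hgB : ∀ i ∈ I, g i ∈ B i)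
    (hprime : ∀ i ∈ I, IsPrimeIn S (B i)) (hdisj : (I : Set ι).PairwiseDisjoint B) :
    rank S = I.card := by
  have index_injOn {a : ι → PTrans} (ha : ∀ i ∈ I, a i ∈ B i) : Set.InjOn a I := by
    intro i hi j hj hij
    exact hdisj.elim_set hi hj (a i) (ha i hi) (hij ▸ ha j hj)
  have hcard : (g '' I).ncard = I.card := by
    rw [(index_injOn hgB).ncard_image, Set.ncard_coe_finset]
  refine le_antisymm (Nat.sInf_le ⟨_, hgen, hcard⟩) (le_csInf ⟨_, _, hgen, hcard⟩ ?_)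
  rintro _ ⟨A, ⟨hAS, hA⟩, rfl⟩
  have hmeet : ∀ i ∈ I, (A ∩ B i).Nonempty := fun i hi =>
    (hA.symm ▸ hprime i hi).inter_nonempty
      (SetLike.mem_coe.1 (hA.symm ▸ hgen.1 ⟨i, hi, rfl⟩)) (hgB i hi)
  have : Nonempty PTrans := ⟨fun _ => none⟩
  choose! a haA haB using hmeet
  rw [← Set.ncard_coe_finset]
  exact Set.ncard_le_ncard_of_injOn a haA (index_injOn haB) (hS.subset hAS)

end Rank

/-! ### The generators -/

section Generators

variable {n p q a b x y : ℕ} {i : ℕ × ℕ}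

/-- The indices of the generators: all pairs of points of `{1, …, n}` except the `(b + 1, b)`. -/
def genIndex (n : ℕ) : Finset (ℕ × ℕ) :=
  {i ∈ Finset.Icc 1 n ×ˢ Finset.Icc 1 n | i.1 ≠ i.2 + 1}

/-- The generator with index `i`. For `i.1 < i.2` it maps `i.2` to `i.1` and fixes the points of
`[i.1, i.2)`, and all other points as well if `i.2 = i.1 + 1`; for `i.1 = i.2` it is the identity
with one point removed; for `i.2 < i.1` it is `γ_{i.2,i.1}`. The identity takes the index `(n, 1)`,
because `γ_{1,n}` is the partial identity on `{1, n}`, which is a product of other generators. -/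
noncomputable def generator (n : ℕ) (i : ℕ × ℕ) : PTrans :=
  if i.1 = i.2 then partialId (Set.Icc 1 n \ {i.2})
  else if i.1 + 1 = i.2 then deltaMap i.2 (Set.Icc 1 n \ {i.2})
  else if i.1 < i.2 then xi i.1 (i.2 - 1)
  else if i = (n, 1) then partialId (Set.Icc 1 n)
  else gamma n i.2 i.1

theorem mem_genIndex :
    i ∈ genIndex n ↔ 1 ≤ i.1 ∧ i.1 ≤ n ∧ 1 ≤ i.2 ∧ i.2 ≤ n ∧ i.1 ≠ i.2 + 1 := by
  simp only [genIndex, Finset.mem_filter, Finset.mem_product, Finset.mem_Icc, and_assoc]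

theorem card_genIndex (hn : 1 ≤ n) : (genIndex n).card = n ^ 2 - n + 1 := by
  have hexcluded : {i ∈ Finset.Icc 1 n ×ˢ Finset.Icc 1 n | i.1 = i.2 + 1} =
      (Finset.Ico 1 n).image fun b => (b + 1, b) := by
    ext ⟨a, b⟩
    simp only [Finset.mem_filter, Finset.mem_product, Finset.mem_Icc, Finset.mem_image,
      Finset.mem_Ico, Prod.mk.injEq]
    constructor
    · rintro ⟨⟨ha, hb⟩, rfl⟩
      exact ⟨b, by omega, rfl, rfl⟩
    · rintro ⟨c, hc, rfl, rfl⟩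
      omega
  have hcard := Finset.card_filter_add_card_filter_not (s := Finset.Icc 1 n ×ˢ Finset.Icc 1 n)
    fun i => i.1 = i.2 + 1
  rw [hexcluded, Finset.card_image_of_injective _ fun b c h => congrArg Prod.snd h,
    Nat.card_Ico, Finset.card_product, Nat.card_Icc, Nat.add_sub_cancel, ← sq] at hcard
  have : n ≤ n ^ 2 := Nat.le_self_pow two_ne_zero n
  change (n - 1) + (genIndex n).card = n ^ 2 at hcard
  omega

theorem generator_hole (n b : ℕ) : generator n (b, b) = partialId (Set.Icc 1 n \ {b}) :=
  if_pos rfl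

theorem generator_delta (n a : ℕ) :
    generator n (a, a + 1) = deltaMap (a + 1) (Set.Icc 1 n \ {a + 1}) := by
  simp [generator]

theorem generator_xi (h : a + 1 < b) : generator n (a, b) = xi a (b - 1) := by
  grind [generator]

theorem generator_id (hn : 3 ≤ n) : generator n (n, 1) = partialId (Set.Icc 1 n) := by
  grind [generator]

theorem generator_gamma (h : b < a) (hne : (a, b) ≠ (n, 1)) : generator n (a, b) = gamma n b a := by
  grind [generator]

theorem partialId_eq_some_iff {Y : Set ℕ} : partialId Y x = some y ↔ x ∈ Y ∧ x = y := by
  simp [partialId]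

theorem deltaMap_puncture_eq_some_iff (hb : 1 ≤ b) (hbn : b ≤ n) :
    deltaMap b (Set.Icc 1 n \ {b}) x = some y ↔
      1 ≤ x ∧ x ≤ n ∧ ((x = b ∧ y = b - 1) ∨ (x ≠ b ∧ y = x)) := by
  unfold deltaMap
  split_ifs with h₁ h₂ <;>
    simp only [Set.mem_sdiff, Set.mem_Icc, Set.mem_singleton_iff, Option.some.injEq,
      false_iff] at h₁ ⊢ <;> omega

theorem xi_eq_some_iff :
    xi p q x = some y ↔ (p ≤ x ∧ x ≤ q ∧ y = x) ∨ (¬ (p ≤ x ∧ x ≤ q) ∧ x = q + 1 ∧ y = p) := by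
  unfold xi
  split_ifs <;> simp only [Option.some.injEq, false_iff] <;> omega

theorem gamma_eq_some_iff (hp : 1 ≤ p) (hpq : p < q) (hq : q ≤ n) :
    gamma n p q x = some y ↔
      (p ≤ x ∧ x < q ∧ x + y = 2 * p ∧ 1 ≤ y) ∨ (q ≤ x ∧ x ≤ n ∧ x + y = 2 * q ∧ p < y) := by
  unfold gamma
  split_ifs <;> simp only [Option.some.injEq, false_iff] <;> omega

/-- The semigroup of order-preserving order-decreasing partial transformations of `{1, …, n}`. -/
def POD (n : ℕ) : Set PTrans :=
  {f | DecrOn n f ∧ OrderPres f}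

theorem POD_subset_PORD (n : ℕ) : POD n ⊆ PORD n :=
  fun _ hf => mem_PORD_iff.2 ⟨hf.1, Or.inl hf.2.cycMonotone⟩

theorem partialId_mem_POD {Y : Set ℕ} (hY : Y ⊆ Set.Icc 1 n) : partialId Y ∈ POD n := by
  refine ⟨fun x y h => ?_, fun x y u v hu hv hxy => ?_⟩
  · obtain ⟨hx, rfl⟩ := partialId_eq_some_iff.1 h
    exact ⟨(hY hx).1, le_rfl, (hY hx).2⟩
  · rwa [← (partialId_eq_some_iff.1 hu).2, ← (partialId_eq_some_iff.1 hv).2]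

theorem deltaMap_puncture_mem_POD (hb : 2 ≤ b) (hbn : b ≤ n) :
    deltaMap b (Set.Icc 1 n \ {b}) ∈ POD n := by
  have hdelta {x y : ℕ} := deltaMap_puncture_eq_some_iff (x := x) (y := y) (by omega : 1 ≤ b) hbn
  refine ⟨fun x y h => ?_, fun x y u v hu hv hxy => ?_⟩
  · rw [hdelta] at h
    omega
  · rw [hdelta] at hu hv
    omega

theorem xi_mem_PORD (hp : 1 ≤ p) (hpq : p ≤ q) (hq : q < n) : xi p q ∈ PORD n := by
  refine mem_PORD_iff.2 ⟨fun x y h => ?_, Or.inl fun w x y z a b c d hwx hxy hyz ha hb hc hd => ?_⟩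
  · rw [xi_eq_some_iff] at h
    omega
  · rw [xi_eq_some_iff] at ha hb hc hd
    unfold CycChain
    omega

theorem gamma_mem_PORD (hp : 1 ≤ p) (hpq : p < q) (hq : q ≤ n) : gamma n p q ∈ PORD n := by
  refine mem_PORD_iff.2 ⟨fun x y h => ?_, Or.inr fun w x y z a b c d hwx hxy hyz ha hb hc hd => ?_⟩
  · rw [gamma_eq_some_iff hp hpq hq] at h
    omega
  · rw [gamma_eq_some_iff hp hpq hq] at ha hb hc hd
    unfold CycChain
    omega

theorem generator_mem_PORD (hi : i ∈ genIndex n) : generator n i ∈ PORD n := by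
  rw [mem_genIndex] at hi
  unfold generator
  split_ifs with h₁ h₂ h₃ h₄
  · exact POD_subset_PORD n (partialId_mem_POD Set.sdiff_subset)
  · exact POD_subset_PORD n (deltaMap_puncture_mem_POD (by omega) (by omega))
  · exact xi_mem_PORD (by omega) (by omega) (by omega)
  · exact POD_subset_PORD n (partialId_mem_POD le_rfl)
  · exact gamma_mem_PORD (by omega) (by omega) (by omega)

end Generators

/-! ### Generation of the order-preserving maps -/

section OrderPreserving

variable {f : PTrans} {n i j : ℕ} {T : Subsemigroup PTrans}

theorem partialId_mul_partialId (Y Z : Set ℕ) : partialId Y * partialId Z = partialId (Y ∩ Z) := by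
  refine ext_eq_some fun x y => ?_
  simp only [mul_eq_some_iff, partialId_eq_some_iff, Set.mem_inter_iff]
  grind

theorem partialId_mem_of_holes (hid : partialId (Set.Icc 1 n) ∈ T)
    (hhole : ∀ b, 1 ≤ b → b ≤ n → partialId (Set.Icc 1 n \ {b}) ∈ T) {Y : Set ℕ}
    (hY : Y ⊆ Set.Icc 1 n) : partialId Y ∈ T := by
  have remove : ∀ s : Finset ℕ, (s : Set ℕ) ⊆ Set.Icc 1 n → partialId (Set.Icc 1 n \ s) ∈ T := by
    intro s
    induction s using Finset.induction_on with
    | empty => simpa using hid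
    | insert a s _ ih =>
      intro hs
      rw [Finset.coe_insert, Set.insert_subset_iff] at hs
      have := T.mul_mem (hhole a hs.1.1 hs.1.2) (ih hs.2)
      rwa [partialId_mul_partialId, Set.sdiff_inter_sdiff, Set.singleton_union,
        ← Finset.coe_insert] at this
  have hfin : (Set.Icc 1 n \ Y).Finite := (Set.finite_Icc 1 n).sdiff
  have := remove hfin.toFinset (by simp)
  rwa [hfin.coe_toFinset, Set.sdiff_sdiff_cancel_left hY] at this

theorem eq_partialId_of_forall_fixed (hf : ∀ x y, f x = some y → y = x) :
    f = partialId (domSet f) := by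
  refine ext_eq_some fun x y => ?_
  rw [partialId_eq_some_iff]
  refine ⟨fun h => ⟨mem_domSet_of_eq_some h, (hf x y h).symm⟩, ?_⟩
  rintro ⟨hx, rfl⟩
  rw [eq_some_val hx, hf x _ (eq_some_val hx)]

theorem DecrOn.exists_max_moved (hf : DecrOn n f) (hmoved : ¬ ∀ x y, f x = some y → y = x) :
    ∃ i j, f i = some j ∧ j < i ∧ ∀ x y, i < x → f x = some y → y = x := by
  let moved : Set ℕ := {x ∈ domSet f | val f x < x}
  have hfin : moved.Finite :=
    (Set.finite_Icc 1 n).subset ((Set.sep_subset _ _).trans hf.domSet_subset)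
  have hne : moved.Nonempty := by
    push Not at hmoved
    obtain ⟨x, y, hxy, hne⟩ := hmoved
    refine ⟨x, mem_domSet_of_eq_some hxy, ?_⟩
    rw [val_eq_of_eq_some hxy]
    exact lt_of_le_of_ne (hf x y hxy).2.1 hne
  obtain ⟨i, ⟨hi, hlt⟩, hmax⟩ := Set.exists_max_image moved id hfin hne
  refine ⟨i, val f i, eq_some_val hi, hlt, fun x y hix hxy => ?_⟩
  by_contra hne
  refine hix.not_ge (hmax x ⟨mem_domSet_of_eq_some hxy, ?_⟩)
  rw [val_eq_of_eq_some hxy]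
  exact lt_of_le_of_ne (hf x y hxy).2.1 hne

/-- `f` with its value at `i` replaced by `k`. -/
def updateAt (f : PTrans) (i k : ℕ) : PTrans :=
  fun x => if x = i then some k else f x

theorem updateAt_eq_some_iff {k x y : ℕ} :
    updateAt f i k x = some y ↔ (x = i ∧ y = k) ∨ (x ≠ i ∧ f x = some y) := by
  rcases eq_or_ne x i with rfl | hx
  · simp [updateAt, eq_comm]
  · simp [updateAt, hx]

theorem updateAt_mem_POD (hf : f ∈ POD n) (hij : f i = some j) (hji : j < i)
    (hfix : ∀ x y, i < x → f x = some y → y = x) : updateAt f i (j + 1) ∈ POD n := by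
  have hi := hf.1 i j hij
  refine ⟨fun x y hxy => ?_, fun x y u v hu hv hxy => ?_⟩
  · rcases updateAt_eq_some_iff.1 hxy with ⟨rfl, rfl⟩ | ⟨-, hxy⟩
    · omega
    · exact hf.1 x y hxy
  · rcases updateAt_eq_some_iff.1 hu with ⟨rfl, rfl⟩ | ⟨-, hu'⟩ <;>
      rcases updateAt_eq_some_iff.1 hv with ⟨rfl, rfl⟩ | ⟨hne, hv'⟩
    · exact le_rfl
    · have := hfix y v (by omega) hv'
      omega
    · exact (hf.2 x y u j hu' hij hxy).trans j.le_succ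
    · exact hf.2 x y u v hu' hv' hxy

theorem eq_updateAt_mul_deltaMap (hf : f ∈ POD n) (hij : f i = some j) (hji : j < i)
    (hfix : ∀ x y, i < x → f x = some y → y = x) :
    f = updateAt f i (j + 1) * deltaMap (j + 1) (Set.Icc 1 n \ {j + 1}) := by
  have hi := hf.1 i j hij
  have avoids {x y : ℕ} (hx : x ≠ i) (hxy : f x = some y) : y ≠ j + 1 := by
    rcases hx.lt_or_gt with hlt | hgt
    · exact (Nat.lt_succ_of_le (hf.2 x i y j hxy hij hlt.le)).ne
    · have := hfix x y hgt hxy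
      omega
  refine ext_eq_some fun x z => ?_
  simp only [mul_eq_some_iff, updateAt_eq_some_iff,
    deltaMap_puncture_eq_some_iff (n := n) (b := j + 1) (by omega) (by omega)]
  rcases eq_or_ne x i with rfl | hx
  · simp only [hij, Option.some.injEq]
    grind
  · constructor
    · intro hxz
      have := hf.1 x z hxz
      exact ⟨z, Or.inr ⟨hx, hxz⟩, by omega, by omega, Or.inr ⟨avoids hx hxz, rfl⟩⟩
    · rintro ⟨y, ⟨hxi, -⟩ | ⟨-, hxy⟩, -, -, ⟨hy, -⟩ | ⟨-, rfl⟩⟩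
      · exact absurd hxi hx
      · exact absurd hxi hx
      · exact absurd hy (avoids hx hxy)
      · exact hxy

theorem sum_sub_updateAt_lt (hi : i ∈ Finset.Icc 1 n) (hij : f i = some j) (hji : j < i) :
    ∑ x ∈ Finset.Icc 1 n, (x - val (updateAt f i (j + 1)) x) <
      ∑ x ∈ Finset.Icc 1 n, (x - val f x) := by
  have hupd : val (updateAt f i (j + 1)) i = j + 1 :=
    val_eq_of_eq_some (updateAt_eq_some_iff.2 (Or.inl ⟨rfl, rfl⟩))
  refine Finset.sum_lt_sum (fun x _ => ?_) ⟨i, hi, ?_⟩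
  · rcases eq_or_ne x i with rfl | hx
    · rw [hupd, val_eq_of_eq_some hij]
      omega
    · simp [val, updateAt, hx]
  · rw [hupd, val_eq_of_eq_some hij]
    omega

theorem POD_subset_of_generators (hid : partialId (Set.Icc 1 n) ∈ T)
    (hhole : ∀ b, 1 ≤ b → b ≤ n → partialId (Set.Icc 1 n \ {b}) ∈ T)
    (hdelta : ∀ b, 2 ≤ b → b ≤ n → deltaMap b (Set.Icc 1 n \ {b}) ∈ T) : POD n ⊆ T := by
  intro f hf
  induction hk : ∑ x ∈ Finset.Icc 1 n, (x - val f x) using Nat.strong_induction_on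
    generalizing f with
  | _ k ih =>
    by_cases hfixed : ∀ x y, f x = some y → y = x
    · rw [eq_partialId_of_forall_fixed hfixed]
      exact partialId_mem_of_holes hid hhole hf.1.domSet_subset
    · obtain ⟨i, j, hij, hji, hfix⟩ := hf.1.exists_max_moved hfixed
      have hi := hf.1 i j hij
      have hdrop := sum_sub_updateAt_lt (Finset.mem_Icc.2 ⟨by omega, hi.2.2⟩) hij hji
      rw [eq_updateAt_mul_deltaMap hf hij hji hfix]
      exact T.mul_mem (ih _ (hk ▸ hdrop) (updateAt_mem_POD hf hij hji hfix) rfl)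
        (hdelta _ (by omega) (by omega))

end OrderPreserving

/-! ### Generation of the oriented maps -/

section Generation

variable {f g : PTrans} {n m M p q a b x y : ℕ} {T : Subsemigroup PTrans}

theorem exists_eq_some_iff {R : ℕ → ℕ → Prop} (hR : ∀ y z z', R y z → R y z' → z = z') :
    ∃ h : PTrans, ∀ y z, h y = some z ↔ R y z := by
  have hpoint : ∀ y, ∃ o : Option ℕ, ∀ z, o = some z ↔ R y z := by
    intro y
    by_cases hy : ∃ z, R y z
    · obtain ⟨z, hz⟩ := hy
      refine ⟨some z, fun z' => ?_⟩
      rw [Option.some.injEq]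
      exact ⟨fun h => h ▸ hz, hR y z z' hz⟩
    · exact ⟨none, fun z => ⟨nofun, fun hz => absurd ⟨z, hz⟩ hy⟩⟩
  choose h hh using hpoint
  exact ⟨h, hh⟩

theorem exists_eq_mul_of_le (hf : DecrOn n f) (hg : DecrOn n g) (hdom : domSet f = domSet g)
    (hle : ∀ x u v, f x = some u → g x = some v → u ≤ v)
    (hmono : ∀ x y a b u v, f x = some a → f y = some b → g x = some u → g y = some v →
      u ≤ v → a ≤ b) : ∃ h ∈ POD n, f = g * h := by
  have hwell : ∀ y z z', (∃ x, g x = some y ∧ f x = some z) →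
      (∃ x, g x = some y ∧ f x = some z') → z = z' := by
    rintro y z z' ⟨x, hx, hz⟩ ⟨x', hx', hz'⟩
    exact le_antisymm (hmono x x' z z' y y hz hz' hx hx' le_rfl)
      (hmono x' x z' z y y hz' hz hx' hx le_rfl)
  obtain ⟨h, hh⟩ := exists_eq_some_iff hwell
  refine ⟨h, ⟨fun y z hyz => ?_, fun y y' z z' hz hz' hyy' => ?_⟩, ext_eq_some fun x z => ?_⟩
  · obtain ⟨x, hxy, hxz⟩ := (hh y z).1 hyz
    exact ⟨(hf x z hxz).1, hle x z y hxz hxy, (hg x y hxy).2.1.trans (hg x y hxy).2.2⟩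
  · obtain ⟨x, hx, hxz⟩ := (hh y z).1 hz
    obtain ⟨x', hx', hxz'⟩ := (hh y' z').1 hz'
    exact hmono x x' z z' y y' hxz hxz' hx hx' hyy'
  · rw [mul_eq_some_iff]
    constructor
    · intro hxz
      have hx : x ∈ domSet g := hdom ▸ mem_domSet_of_eq_some hxz
      exact ⟨_, eq_some_val hx, (hh _ z).2 ⟨x, eq_some_val hx, hxz⟩⟩
    · rintro ⟨y, hxy, hyz⟩
      have hx : x ∈ domSet f := hdom ▸ mem_domSet_of_eq_some hxy
      rw [eq_some_val hx, hwell y _ z ⟨x, hxy, eq_some_val hx⟩ ((hh y z).1 hyz)]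

/-- The left factor `β` in a factorization `f = β γ_{p,q} h` with `β` and `h` order-preserving,
where `f` reverses the order below `q` and from `q` on: `β` is chosen so that `β γ_{p,q}` maps `x`
to `max (2p - x) (f x)` if `x < q` and to `max (2q - x) (f x)` otherwise. -/
noncomputable def unfoldMap (f : PTrans) (p q : ℕ) : PTrans :=
  fun x => (f x).map fun a => if x < q then min x (2 * p - a) else min x (2 * q - a)

theorem unfoldMap_eq_some_iff :
    unfoldMap f p q x = some y ↔
      ∃ a, f x = some a ∧ ((x < q ∧ y = min x (2 * p - a)) ∨ (q ≤ x ∧ y = min x (2 * q - a))) := by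
  rw [unfoldMap, Option.map_eq_some_iff]
  grind

section AntitoneBlocks

variable (hf : DecrOn n f) (hp : 1 ≤ p) (hpq : p < q) (hq : q ≤ n)
  (hlow : ∀ x a, f x = some a → x < q → p ≤ x ∧ a ≤ p)
  (hhigh : ∀ x a, f x = some a → q ≤ x → p < a ∧ a ≤ q)
  (hanti : ∀ x y a b, f x = some a → f y = some b → x ≤ y → (y < q ∨ q ≤ x) → b ≤ a)

include hf hlow hhigh hanti in
theorem unfoldMap_mem_POD : unfoldMap f p q ∈ POD n := by
  refine ⟨fun x y hxy => ?_, fun x y u v hu hv hxy => ?_⟩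
  · obtain ⟨a, ha, h⟩ := unfoldMap_eq_some_iff.1 hxy
    have := hf x a ha
    have := hlow x a ha
    have := hhigh x a ha
    omega
  · obtain ⟨a, ha, hu⟩ := unfoldMap_eq_some_iff.1 hu
    obtain ⟨b, hb, hv⟩ := unfoldMap_eq_some_iff.1 hv
    have := hanti x y a b ha hb hxy
    have := hlow x a ha
    have := hhigh y b hb
    omega

include hf hp hpq hq hlow hhigh in
theorem unfoldMap_mul_gamma_eq_some_iff :
    (unfoldMap f p q * gamma n p q) x = some y ↔
      ∃ a, f x = some a ∧ ((x < q ∧ y = max (2 * p - x) a) ∨ (q ≤ x ∧ y = max (2 * q - x) a)) := by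
  rw [mul_eq_some_iff]
  constructor
  · rintro ⟨z, hxz, hzy⟩
    obtain ⟨a, ha, hz⟩ := unfoldMap_eq_some_iff.1 hxz
    rw [gamma_eq_some_iff hp hpq hq] at hzy
    have := hlow x a ha
    have := hhigh x a ha
    exact ⟨a, ha, by omega⟩
  · rintro ⟨a, ha, hy⟩
    have := hf x a ha
    have := hlow x a ha
    have := hhigh x a ha
    simp only [unfoldMap_eq_some_iff, gamma_eq_some_iff hp hpq hq]
    rcases hy with ⟨hxq, rfl⟩ | ⟨hqx, rfl⟩
    · exact ⟨min x (2 * p - a), ⟨a, ha, Or.inl ⟨hxq, rfl⟩⟩, by omega⟩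
    · exact ⟨min x (2 * q - a), ⟨a, ha, Or.inr ⟨hqx, rfl⟩⟩, by omega⟩

include hf hp hpq hq hlow hhigh hanti in
theorem exists_eq_unfoldMap_mul_gamma_mul :
    ∃ h ∈ POD n, f = unfoldMap f p q * gamma n p q * h := by
  have hval {x y : ℕ} := unfoldMap_mul_gamma_eq_some_iff (x := x) (y := y) hf hp hpq hq hlow hhigh
  refine exists_eq_mul_of_le hf ?_ ?_ (fun x u v hu hv => ?_)
    fun x y a b u v ha hb hu hv huv => ?_
  · refine (unfoldMap_mem_POD hf hlow hhigh hanti).1.mul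
      (mem_PORD_iff.1 (gamma_mem_PORD hp hpq hq)).1
  · ext x
    refine ⟨fun hx => ?_, fun hx => ?_⟩
    · rcases lt_or_ge x q with hxq | hqx
      · exact mem_domSet_of_eq_some (hval.2 ⟨_, eq_some_val hx, Or.inl ⟨hxq, rfl⟩⟩)
      · exact mem_domSet_of_eq_some (hval.2 ⟨_, eq_some_val hx, Or.inr ⟨hqx, rfl⟩⟩)
    · obtain ⟨a, ha, -⟩ := hval.1 (eq_some_val hx)
      exact mem_domSet_of_eq_some ha
  · obtain ⟨a, ha, hv⟩ := hval.1 hv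
    obtain rfl : u = a := Option.some.inj (hu.symm.trans ha)
    omega
  · obtain ⟨a', ha', hu⟩ := hval.1 hu
    obtain rfl : a = a' := Option.some.inj (ha.symm.trans ha')
    obtain ⟨b', hb', hv⟩ := hval.1 hv
    obtain rfl : b = b' := Option.some.inj (hb.symm.trans hb')
    have := hlow x a ha
    have := hhigh x a ha
    have := hlow y b hb
    have := hhigh y b hb
    have := hanti y x b a hb ha
    by_contra hlt
    have : x ≠ y := by
      rintro rfl
      exact hlt (Option.some.inj (ha.symm.trans hb)).le
    omega

end AntitoneBlocks

/-- The map `b ↦ M` fixing the points of `(b, M)`: up to its domain, an orientation-preserving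
(but not order-decreasing) left inverse of `ξ_{b,M-1}`. -/
def unwrapMap (b M : ℕ) : PTrans :=
  fun x => if x = b then some M else if b < x ∧ x < M then some x else none

theorem unwrapMap_eq_some_iff :
    unwrapMap b M x = some y ↔ (x = b ∧ y = M) ∨ (b < x ∧ x < M ∧ y = x) := by
  unfold unwrapMap
  split_ifs <;> simp only [Option.some.injEq, false_iff] <;> omega

theorem cycMonotone_unwrapMap : CycMonotone (· ≤ ·) (unwrapMap b M) := by
  intro w x y z a b c d hwx hxy hyz ha hb hc hd
  rw [unwrapMap_eq_some_iff] at ha hb hc hd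
  unfold CycChain
  omega

theorem unwrapMap_mul_mem_PORD (hf : f ∈ PORD n) (hM : f M = some b) :
    unwrapMap b M * f ∈ PORD n := by
  rw [mem_PORD_iff] at *
  refine ⟨fun x z hxz => ?_, hf.2.imp cycMonotone_unwrapMap.mul cycMonotone_unwrapMap.mul⟩
  obtain ⟨y, hxy, hyz⟩ := mul_eq_some_iff.1 hxz
  have := hf.1 y z hyz
  rcases unwrapMap_eq_some_iff.1 hxy with ⟨rfl, rfl⟩ | ⟨-, -, rfl⟩
  · obtain rfl : x = z := Option.some.inj (hM.symm.trans hyz)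
    omega
  · exact this

theorem eq_partialId_mul_xi_mul_unwrapMap_mul (hf : DecrOn n f) (hm : f m = some a)
    (hM : f M = some b) (hba : b ≤ a) (hbM : b < M)
    (hbd : ∀ x u, f x = some u → m ≤ x ∧ x ≤ M) :
    f = partialId (domSet f) * (xi b (M - 1) * (unwrapMap b M * f)) := by
  have through_b : (unwrapMap b M * f) b = some b :=
    mul_eq_some_iff.2 ⟨M, unwrapMap_eq_some_iff.2 (Or.inl ⟨rfl, rfl⟩), hM⟩
  have hma := hf m a hm
  have restrict_eq {x : ℕ} (hx : x ∈ domSet f) : (xi b (M - 1) * (unwrapMap b M * f)) x = f x := by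
    have hxM := hbd x _ (eq_some_val hx)
    obtain rfl | hxM : x = M ∨ x < M := by omega
    · rw [mul_apply, (xi_eq_some_iff (y := b)).2 (by omega), hM]
      exact through_b
    · rw [mul_apply, (xi_eq_some_iff (y := x)).2 (by omega)]
      obtain rfl | hbx : b = x ∨ b < x := by omega
      · obtain rfl : m = b := by omega
        obtain rfl : a = m := by omega
        rw [hm]
        exact through_b
      · change (unwrapMap b M * f) x = f x
        rw [mul_apply, (unwrapMap_eq_some_iff (y := x)).2 (by omega)]
        rfl
  refine ext_eq_some fun x z => ?_
  rw [mul_eq_some_iff]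
  constructor
  · intro hxz
    have hx := mem_domSet_of_eq_some hxz
    exact ⟨x, partialId_eq_some_iff.2 ⟨hx, rfl⟩, (restrict_eq hx).trans hxz⟩
  · rintro ⟨y, hxy, hyz⟩
    obtain ⟨hx, rfl⟩ := partialId_eq_some_iff.1 hxy
    exact (restrict_eq hx).symm.trans hyz

theorem CycMonotone.orderPres_of_lt (ho : CycMonotone (· ≤ ·) f) (hm : f m = some a)
    (hM : f M = some b) (hbd : ∀ x u, f x = some u → m ≤ x ∧ x ≤ M) (hab : a < b) :
    OrderPres f := by
  intro x y u v hu hv hxy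
  have := ho (hbd x u hu).1 hxy (hbd y v hv).2 hm hu hv hM
  unfold CycChain at this
  omega

/-- The first point at which `f` exceeds `a`: the start of the second of the two blocks on which
an orientation-reversing map is decreasing, if `a` is the value at the first point. -/
noncomputable def firstAbove (f : PTrans) (a : ℕ) : ℕ :=
  sInf {x | ∃ u, f x = some u ∧ a < u}

theorem exists_firstAbove_eq (hM : f M = some b) (hab : a < b) :
    ∃ c, f (firstAbove f a) = some c ∧ a < c :=
  Nat.sInf_mem (s := {x | ∃ u, f x = some u ∧ a < u}) ⟨M, b, hM, hab⟩

theorem le_of_lt_firstAbove {u : ℕ} (hu : f x = some u) (hx : x < firstAbove f a) : u ≤ a := by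
  by_contra hlt
  exact hx.not_ge (Nat.sInf_le ⟨u, hu, not_le.1 hlt⟩)

theorem exists_eq_mul_gamma_mul (hf : DecrOn n f) (ho : CycMonotone (· ≥ ·) f)
    (hm : f m = some a) (hM : f M = some b) (hbd : ∀ x u, f x = some u → m ≤ x ∧ x ≤ M)
    (hab : a < b) : ∃ q, a < q ∧ q ≤ n ∧ ∃ g ∈ POD n, ∃ h ∈ POD n, f = g * gamma n a q * h := by
  obtain ⟨c, hc, hac⟩ := exists_firstAbove_eq hM hab
  set q := firstAbove f a
  have quad {x y u v : ℕ} (hu : f x = some u) (hv : f y = some v) (hxy : x ≤ y) :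
      CycChain (· ≥ ·) a u v b :=
    ho (hbd x u hu).1 hxy (hbd y v hv).2 hm hu hv hM
  have hlow : ∀ x u, f x = some u → x < q → u ≤ a := fun x u hu => le_of_lt_firstAbove hu
  have hhigh : ∀ x u, f x = some u → q ≤ x → a < u ∧ u ≤ c := by
    intro x u hu hqx
    have := quad hc hu hqx
    unfold CycChain at this
    omega
  have hanti : ∀ x y u v, f x = some u → f y = some v → x ≤ y → (y < q ∨ q ≤ x) → v ≤ u := by
    intro x y u v hu hv hxy h
    have := hlow y v hv
    have := hhigh x u hu
    have := quad hu hv hxy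
    unfold CycChain at this
    omega
  have hma := hf m a hm
  have hqc := hf q c hc
  have hlow' : ∀ x u, f x = some u → x < q → a ≤ x ∧ u ≤ a := fun x u hu hx =>
    ⟨hma.2.1.trans (hbd x u hu).1, hlow x u hu hx⟩
  have hhigh' : ∀ x u, f x = some u → q ≤ x → a < u ∧ u ≤ q := fun x u hu hx =>
    (hhigh x u hu hx).imp_right (·.trans hqc.2.1)
  refine ⟨q, by omega, by omega, _, unfoldMap_mem_POD hf hlow' hhigh' hanti, ?_⟩
  exact exists_eq_unfoldMap_mul_gamma_mul hf hma.1 (by omega) hqc.2.2 hlow' hhigh' hanti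

theorem DecrOn.orderPres_of_le (hf : DecrOn n f) (hm : f m = some a) (hM : f M = some b)
    (hbd : ∀ x u, f x = some u → m ≤ x ∧ x ≤ M) (hba : b ≤ a) (hMb : M ≤ b + 1) :
    OrderPres f := by
  intro x y u v hu hv hxy
  have := hf m a hm
  have := hbd x u hu
  have := hbd y v hv
  obtain rfl | hlt := hxy.eq_or_lt
  · exact (Option.some.inj (hu.symm.trans hv)).le
  · obtain rfl : x = m := by omega
    obtain rfl : y = M := by omega
    rw [hu, Option.some.injEq] at hm
    rw [hv, Option.some.injEq] at hM
    have := hf y v hv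
    omega

theorem exists_endpoints (hf : DecrOn n f) (hne : (domSet f).Nonempty) :
    ∃ m M a b, f m = some a ∧ f M = some b ∧ ∀ x u, f x = some u → m ≤ x ∧ x ≤ M := by
  have hfin := (Set.finite_Icc 1 n).subset hf.domSet_subset
  obtain ⟨m, hm, hmin⟩ := Set.exists_min_image (domSet f) id hfin hne
  obtain ⟨M, hM, hmax⟩ := Set.exists_max_image (domSet f) id hfin hne
  exact ⟨m, M, _, _, eq_some_val hm, eq_some_val hM, fun x u hu =>
    ⟨hmin x (mem_domSet_of_eq_some hu), hmax x (mem_domSet_of_eq_some hu)⟩⟩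

theorem PORD_subset_of_generators (hT : POD n ⊆ T)
    (hxi : ∀ p q, 1 ≤ p → p < q → q < n → xi p q ∈ T)
    (hgamma : ∀ p q, 1 ≤ p → p < q → q ≤ n → gamma n p q ∈ T) : PORD n ⊆ T := by
  suffices ∀ k, ∀ f ∈ PORD n, (∀ x u, f x = some u → x < k) → f ∈ T from fun f hf =>
    this (n + 1) f hf fun x u hu => Nat.lt_succ_of_le ((mem_PORD_iff.1 hf).1 x u hu).2.2
  intro k
  induction k using Nat.strong_induction_on with
  | _ k ih =>
  intro f hf hk
  obtain ⟨hd, ho⟩ := mem_PORD_iff.1 hf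
  rcases (domSet f).eq_empty_or_nonempty with hempty | hne
  · refine hT ⟨hd, fun x y u v hu _ _ => ?_⟩
    exact absurd (mem_domSet_of_eq_some hu) (hempty ▸ Set.notMem_empty x)
  obtain ⟨m, M, a, b, hm, hM, hbd⟩ := exists_endpoints hd hne
  have hma := hd m a hm
  have hMb := hd M b hM
  rcases lt_or_ge a b with hab | hba
  · rcases ho with ho | ho
    · exact hT ⟨hd, ho.orderPres_of_lt hm hM hbd hab⟩
    · obtain ⟨q, haq, hqn, g, hg, h, hh, hfac⟩ := exists_eq_mul_gamma_mul hd ho hm hM hbd hab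
      rw [hfac]
      exact T.mul_mem (T.mul_mem (hT hg) (hgamma a q hma.1 haq hqn)) (hT hh)
  rcases le_or_gt M (b + 1) with hMb' | hbM
  · exact hT ⟨hd, hd.orderPres_of_le hm hM hbd hba hMb'⟩
  · rw [eq_partialId_mul_xi_mul_unwrapMap_mul hd hm hM hba (by omega) hbd]
    have hdom : ∀ x u, (unwrapMap b M * f) x = some u → x < M := by
      intro x u hxu
      obtain ⟨y, hxy, -⟩ := mul_eq_some_iff.1 hxu
      rw [unwrapMap_eq_some_iff] at hxy
      omega
    exact T.mul_mem (hT (partialId_mem_POD hd.domSet_subset)) <|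
      T.mul_mem (hxi b (M - 1) hMb.1 (by omega) (by omega))
        (ih M (hk M b hM) _ (unwrapMap_mul_mem_PORD hf hM) hdom)

theorem gamma_mem_POD (hp : 1 ≤ p) (hpq : p < q) (hq : q ≤ n)
    (h : q = p + 1 ∨ (p = 1 ∧ q = n)) : gamma n p q ∈ POD n := by
  refine ⟨(mem_PORD_iff.1 (gamma_mem_PORD hp hpq hq)).1, fun x y u v hu hv hxy => ?_⟩
  rw [gamma_eq_some_iff hp hpq hq] at hu hv
  omega

theorem isGenSet_generator (hn : 3 ≤ n) :
    IsGenSet (PORD n) (generator n '' (genIndex n : Set (ℕ × ℕ))) := by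
  have hsub : generator n '' (genIndex n : Set (ℕ × ℕ)) ⊆ PORD n := by
    rintro _ ⟨i, hi, rfl⟩
    exact generator_mem_PORD hi
  refine ⟨hsub, Set.Subset.antisymm (fun f hf => ?_) ?_⟩
  · induction hf using Subsemigroup.closure_induction with
    | mem f hf => exact hsub hf
    | mul f g _ _ hf hg => exact mul_mem_PORD hf hg
  set T := Subsemigroup.closure (generator n '' (genIndex n : Set (ℕ × ℕ)))
  have hmem (a b : ℕ) (ha : 1 ≤ a ∧ a ≤ n) (hb : 1 ≤ b ∧ b ≤ n) (hab : a ≠ b + 1) :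
      generator n (a, b) ∈ T :=
    Subsemigroup.subset_closure ⟨_, mem_genIndex.2 ⟨ha.1, ha.2, hb.1, hb.2, hab⟩, rfl⟩
  have hPOD : POD n ⊆ T := by
    refine POD_subset_of_generators ?_ (fun b hb hbn => ?_) fun b hb hbn => ?_
    · exact generator_id hn ▸ hmem n 1 (by omega) (by omega) (by omega)
    · exact generator_hole n b ▸ hmem b b ⟨hb, hbn⟩ ⟨hb, hbn⟩ (by omega)
    · obtain ⟨a, rfl⟩ := Nat.exists_eq_add_of_le' (show 1 ≤ b by omega)
      exact generator_delta n a ▸ hmem a (a + 1) (by omega) (by omega) (by omega)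
  refine PORD_subset_of_generators hPOD (fun p q hp hpq hq => ?_) fun p q hp hpq hq => ?_
  · exact generator_xi (n := n) (b := q + 1) (by omega : p + 1 < q + 1) ▸
      hmem p (q + 1) (by omega) (by omega) (by omega)
  · by_cases h : q = p + 1 ∨ (p = 1 ∧ q = n)
    · exact hPOD (gamma_mem_POD hp hpq hq h)
    · rw [← generator_gamma hpq (by grind)]
      exact hmem q p (by omega) (by omega) (by omega)

end Generation

/-! ### Maps met by every generating set -/

section PrimeBlocks

variable {f g : PTrans} {n p q a b r k x : ℕ} {i j : ℕ × ℕ}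

/-- `f` agrees with `g` on the domain of `g`. -/
def Extends (f g : PTrans) : Prop :=
  ∀ x y, g x = some y → f x = some y

theorem eq_some_self_of_mul_eq_some_self (hf : DecrOn n f) (hg : DecrOn n g)
    (h : (f * g) x = some x) : f x = some x ∧ g x = some x := by
  obtain ⟨y, hxy, hyx⟩ := mul_eq_some_iff.1 h
  obtain rfl : x = y := le_antisymm (hg y x hyx).2.1 (hf x y hxy).2.1
  exact ⟨hxy, hyx⟩

theorem mul_eq_left (h : ∀ x y, f x = some y → g y = some y) : f * g = f := by
  refine ext_eq_some fun x z => ?_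
  rw [mul_eq_some_iff]
  refine ⟨?_, fun hxz => ⟨z, hxz, h x z hxz⟩⟩
  rintro ⟨y, hxy, hyz⟩
  rwa [← Option.some.inj ((h x y hxy).symm.trans hyz)]

theorem mul_eq_right (hf : ∀ x y, f x = some y → y = x)
    (hdom : ∀ x y, g x = some y → f x = some x) : f * g = g := by
  refine ext_eq_some fun x z => ?_
  rw [mul_eq_some_iff]
  refine ⟨?_, fun hxz => ⟨x, hdom x z hxz, hxz⟩⟩
  rintro ⟨y, hxy, hyz⟩
  rwa [← hf x y hxy]

theorem undecomposable_of_forall_ne_fixed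
    (h : ∀ x, 1 ≤ x → x ≤ n → x ≠ b → f x = some x) : Undecomposable (PORD n) f := by
  rintro g hg k hk rfl
  replace hg := (mem_PORD_iff.1 hg).1
  replace hk := (mem_PORD_iff.1 hk).1
  have hfix {x : ℕ} (h1 : 1 ≤ x) (hn : x ≤ n) (hb : x ≠ b) : g x = some x ∧ k x = some x :=
    eq_some_self_of_mul_eq_some_self hg hk (h x h1 hn hb)
  have hval {x y : ℕ} (hb : x ≠ b) (hxy : g x = some y) : y = x := by
    have := hg x y hxy
    exact Option.some.inj (hxy.symm.trans (hfix (by omega) this.2.2 hb).1)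
  by_cases hgb : g b = some b
  · refine Or.inr (mul_eq_right (fun x y hxy => ?_) fun x y hxy => ?_)
    · rcases eq_or_ne x b with rfl | hb
      · exact Option.some.inj (hxy.symm.trans hgb)
      · exact hval hb hxy
    · rcases eq_or_ne x b with rfl | hb
      · exact hgb
      · have := hk x y hxy
        exact (hfix (by omega) this.2.2 hb).1
  · refine Or.inl (mul_eq_left fun x y hxy => ?_)
    have := hg x y hxy
    refine (hfix this.1 (by omega) ?_).2
    rintro rfl
    rcases eq_or_ne x y with rfl | hb
    · exact hgb hxy
    · exact hb (hval hb hxy).symm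

theorem extends_xi_iff (hab : a < b) :
    Extends f (xi a (b - 1)) ↔ f b = some a ∧ ∀ x, a ≤ x → x < b → f x = some x := by
  constructor
  · exact fun h => ⟨h b a (xi_eq_some_iff.2 (by omega)), fun x hax hxb =>
      h x x (xi_eq_some_iff.2 (by omega))⟩
  · rintro ⟨hb, hfix⟩ x y hxy
    rcases xi_eq_some_iff.1 hxy with ⟨hax, hxb, rfl⟩ | ⟨-, hxb, rfl⟩
    · exact hfix y hax (by omega)
    · obtain rfl : x = b := by omega
      exact hb

theorem isPrimeIn_extends_xi (hab : a < b) :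
    IsPrimeIn (PORD n) {f ∈ PORD n | Extends f (xi a (b - 1))} := by
  rintro f hf g hg ⟨-, h⟩
  suffices Extends f (xi a (b - 1)) ∨ Extends g (xi a (b - 1)) from
    this.imp (fun h => ⟨hf, h⟩) (fun h => ⟨hg, h⟩)
  replace hf := (mem_PORD_iff.1 hf).1
  replace hg := (mem_PORD_iff.1 hg).1
  simp only [extends_xi_iff hab] at h ⊢
  obtain ⟨hb, hfix⟩ := h
  replace hfix := fun x hax hxb => eq_some_self_of_mul_eq_some_self hf hg (hfix x hax hxb)
  obtain ⟨y, hby, hya⟩ := mul_eq_some_iff.1 hb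
  rcases (hf b y hby).2.1.lt_or_eq with hyb | rfl
  · left
    obtain rfl : a = y := Option.some.inj (hya.symm.trans (hfix y (hg y a hya).2.1 hyb).2)
    exact ⟨hby, fun x hax hxb => (hfix x hax hxb).1⟩
  · exact Or.inr ⟨hya, fun x hax hxb => (hfix x hax hxb).2⟩

/-- `f` reflects the points `r, …, r + k` in `r`. -/
def Reflects (f : PTrans) (r k : ℕ) : Prop :=
  ∀ i ≤ k, f (r + i) = some (r - i)

theorem extends_gamma_iff (hp : 1 ≤ p) (hpq : p < q) (hq : q ≤ n) :
    Extends f (gamma n p q) ↔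
      Reflects f p (min (p - 1) (q - p - 1)) ∧ Reflects f q (min (q - p - 1) (n - q)) := by
  constructor
  · exact fun h => ⟨fun i hi => h _ _ ((gamma_eq_some_iff hp hpq hq).2 (by omega)),
      fun i hi => h _ _ ((gamma_eq_some_iff hp hpq hq).2 (by omega))⟩
  · rintro ⟨hlow, hhigh⟩ x y hxy
    rcases (gamma_eq_some_iff hp hpq hq).1 hxy with h | h
    · have := hlow (x - p) (by omega)
      rwa [show p + (x - p) = x by omega, show p - (x - p) = y by omega] at this
    · have := hhigh (x - q) (by omega)
      rwa [show q + (x - q) = x by omega, show q - (x - q) = y by omega] at this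

theorem Reflects.right_of_mul (hf : DecrOn n f) (hg : DecrOn n g) (h : Reflects (f * g) r k)
    (hmono : ∀ i < k, ∀ u v, f (r + i) = some u → f (r + (i + 1)) = some v → u ≤ v) :
    Reflects g r k := by
  have hfix : ∀ i ≤ k, f (r + i) = some (r + i) := by
    intro i
    induction i with
    | zero => exact fun h0 => (eq_some_self_of_mul_eq_some_self hf hg (h 0 h0)).1
    | succ i ih =>
      intro hi
      obtain ⟨v, hv, hgv⟩ := mul_eq_some_iff.1 (h (i + 1) hi)
      obtain ⟨u, hu, hgu⟩ := mul_eq_some_iff.1 (h i (by omega))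
      obtain rfl : u = r + i := Option.some.inj (hu.symm.trans (ih (by omega)))
      have hne : v ≠ r + i := by
        rintro rfl
        have := Option.some.inj (hgu.symm.trans hgv)
        have := hg _ _ hgv
        omega
      have := hmono i hi _ _ hu hv
      have := hf _ _ hv
      rw [hv, show v = r + (i + 1) by omega]
  intro i hi
  obtain ⟨u, hu, hgu⟩ := mul_eq_some_iff.1 (h i hi)
  rwa [Option.some.inj (hu.symm.trans (hfix i hi))] at hgu

theorem Reflects.left_of_mul (hf : DecrOn n f) (hg : DecrOn n g) (h : Reflects (f * g) r k)
    (hanti : ∀ i < k, ∀ u v, f (r + i) = some u → f (r + (i + 1)) = some v → v ≤ u) :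
    Reflects f r k := by
  intro i
  induction i with
  | zero => exact fun h0 => (eq_some_self_of_mul_eq_some_self hf hg (h 0 h0)).1
  | succ i ih =>
    intro hi
    obtain ⟨v, hv, hgv⟩ := mul_eq_some_iff.1 (h (i + 1) hi)
    obtain ⟨u, hu, hgu⟩ := mul_eq_some_iff.1 (h i (by omega))
    obtain rfl : u = r - i := Option.some.inj (hu.symm.trans (ih (by omega)))
    have hne : v ≠ r - i := by
      rintro rfl
      have := Option.some.inj (hgu.symm.trans hgv)
      have := hg _ _ hgv
      omega
    have := hanti i hi _ _ hu hv
    have := hg _ _ hgv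
    rw [hv, show v = r - (i + 1) by omega]

theorem isPrimeIn_extends_gamma (hp : 1 ≤ p) (hpq : p < q) (hq : q ≤ n) :
    IsPrimeIn (PORD n) {f ∈ PORD n | Extends f (gamma n p q)} := by
  rintro f hf g hg ⟨-, h⟩
  suffices Extends f (gamma n p q) ∨ Extends g (gamma n p q) from
    this.imp (fun h => ⟨hf, h⟩) (fun h => ⟨hg, h⟩)
  obtain ⟨hf, ho⟩ := mem_PORD_iff.1 hf
  replace hg := (mem_PORD_iff.1 hg).1
  simp only [extends_gamma_iff hp hpq hq] at h ⊢
  obtain ⟨hlow, hhigh⟩ := h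
  have hfp := (eq_some_self_of_mul_eq_some_self hf hg (hlow 0 (Nat.zero_le _))).1
  have hfq := (eq_some_self_of_mul_eq_some_self hf hg (hhigh 0 (Nat.zero_le _))).1
  have image_gt {i u : ℕ} (hi : i ≤ min (q - p - 1) (n - q)) (hu : f (q + i) = some u) : p < u := by
    obtain ⟨u', hu', hgu⟩ := mul_eq_some_iff.1 (hhigh i hi)
    obtain rfl : u = u' := Option.some.inj (hu.symm.trans hu')
    have := hg _ _ hgu
    omega
  rcases ho with ho | ho
  · right
    refine ⟨hlow.right_of_mul hf hg fun i hi u v hu hv => ?_,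
      hhigh.right_of_mul hf hg fun i hi u v hu hv => ?_⟩
    · have := ho (by omega) (by omega) (by omega) hfp hu hv hfq
      unfold CycChain at this
      omega
    · have := image_gt (by omega) hu
      have := image_gt (by omega) hv
      have := ho (by omega) (by omega) (by omega) hfp hfq hu hv
      unfold CycChain at this
      omega
  · left
    refine ⟨hlow.left_of_mul hf hg fun i hi u v hu hv => ?_,
      hhigh.left_of_mul hf hg fun i _ u v hu hv => ?_⟩
    · have := hf _ _ hv
      have := ho (by omega) (by omega) (by omega) hfp hu hv hfq
      unfold CycChain at this
      omega
    · have := ho (by omega) (by omega) (by omega) hfp hfq hu hv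
      unfold CycChain at this
      omega

theorem fixSet_of_extends_xi (hf : f ∈ PORD n) (hab : a + 1 < b) (h : Extends f (xi a (b - 1))) :
    fixSet f = Set.Ico a b := by
  obtain ⟨hb, hfix⟩ := (extends_xi_iff (by omega)).1 h
  refine Set.Subset.antisymm (fun x hx => ?_) fun x hx => hfix x hx.1 hx.2
  have ha := hfix a le_rfl (by omega)
  have ha' := hfix (a + 1) (by omega) hab
  have hxb : x ≠ b := by
    rintro rfl
    have := Option.some.inj (hb.symm.trans hx)
    omega
  by_contra hout
  rw [Set.mem_Ico] at hout
  obtain hxa | hbx : x < a ∨ b < x := by omega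
  · rcases (mem_PORD_iff.1 hf).2 with ho | ho <;>
    · have := ho hxa.le (by omega) (by omega) hx ha ha' hb
      unfold CycChain at this
      omega
  · rcases (mem_PORD_iff.1 hf).2 with ho | ho <;>
    · have := ho (by omega) (by omega) hbx.le ha ha' hb hx
      unfold CycChain at this
      omega

theorem exists_drop_of_extends_gamma (hp : 1 ≤ p) (hpq : p + 1 < q) (hq : q ≤ n)
    (hne : ¬ (q = n ∧ p = 1)) (h : Extends f (gamma n p q)) :
    (1 < p ∧ f (p + 1) = some (p - 1)) ∨ f (q + 1) = some (q - 1) := by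
  obtain hp1 | hqn : 1 < p ∨ q < n := by omega
  · exact Or.inl ⟨hp1, h _ _ ((gamma_eq_some_iff hp (by omega) hq).2 (by omega))⟩
  · exact Or.inr (h _ _ ((gamma_eq_some_iff hp (by omega) hq).2 (by omega)))

theorem fixSet_of_extends_gamma (hf : f ∈ PORD n) (hp : 1 ≤ p) (hpq : p + 1 < q) (hq : q ≤ n)
    (hne : ¬ (q = n ∧ p = 1)) (h : Extends f (gamma n p q)) : fixSet f = {q, p} := by
  have hfp : f p = some p := h p p ((gamma_eq_some_iff hp (by omega) hq).2 (by omega))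
  have hfq : f q = some q := h q q ((gamma_eq_some_iff hp (by omega) hq).2 (by omega))
  refine Set.Subset.antisymm (fun x hx => ?_) ?_
  · change f x = some x at hx
    rcases (mem_PORD_iff.1 hf).2 with ho | ho
    · rcases exists_drop_of_extends_gamma hp hpq hq hne h with ⟨hp1, hdrop⟩ | hdrop
      · have := ho le_rfl (by omega) hpq.le hfp hfp hdrop hfq
        unfold CycChain at this
        omega
      · have := ho le_rfl (by omega) (by omega) hfp hfp hfq hdrop
        unfold CycChain at this
        omega
    · by_contra hout
      rw [Set.mem_insert_iff, Set.mem_singleton_iff] at hout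
      obtain hxp | ⟨hpx, hxq⟩ | hqx : x < p ∨ (p < x ∧ x < q) ∨ q < x := by omega
      · have := ho le_rfl hxp.le (by omega) hx hx hfp hfq
        unfold CycChain at this
        omega
      · have := ho le_rfl hpx.le hxq.le hfp hfp hx hfq
        unfold CycChain at this
        omega
      · have := ho le_rfl (by omega) hqx.le hfp hfp hfq hx
        unfold CycChain at this
        omega
  · rintro x (rfl | rfl)
    exacts [hfq, hfp]

/-- The generator with index `i` is the identity on `{1, …, n}` up to its behaviour at `i.2`,
where it moves by at most one. -/
def NearIdentity (n : ℕ) (i : ℕ × ℕ) : Prop :=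
  i.1 = i.2 ∨ i.1 + 1 = i.2 ∨ i = (n, 1)

open scoped Classical in
/-- A prime set containing the generator with index `i` and, among the generators, no other. -/
noncomputable def block (n : ℕ) (i : ℕ × ℕ) : Set PTrans :=
  if NearIdentity n i then {generator n i} else {f ∈ PORD n | Extends f (generator n i)}

theorem generator_eq_some_iff_of_nearIdentity (hn : 3 ≤ n) (hi : i ∈ genIndex n)
    (hnear : NearIdentity n i) {y : ℕ} : generator n i x = some y ↔
      1 ≤ x ∧ x ≤ n ∧ ((y = x ∧ (x ≠ i.2 ∨ i = (n, 1))) ∨ (x = i.2 ∧ i.1 + 1 = x ∧ y = i.1)) := by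
  obtain ⟨a, b⟩ := i
  have hab := mem_genIndex.1 hi
  simp only [NearIdentity, Prod.mk.injEq] at hab hnear ⊢
  rcases hnear with rfl | rfl | ⟨rfl, rfl⟩
  · rw [generator_hole, partialId_eq_some_iff, Set.mem_sdiff, Set.mem_Icc, Set.mem_singleton_iff]
    omega
  · rw [generator_delta, deltaMap_puncture_eq_some_iff hab.2.2.1 hab.2.2.2.1]
    omega
  · rw [generator_id hn, partialId_eq_some_iff, Set.mem_Icc]
    omega

theorem generator_cases_of_not_nearIdentity (hi : i ∈ genIndex n) (hnear : ¬ NearIdentity n i) :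
    (i.1 + 1 < i.2 ∧ generator n i = xi i.1 (i.2 - 1)) ∨
      (i.2 + 1 < i.1 ∧ ¬ (i.1 = n ∧ i.2 = 1) ∧ generator n i = gamma n i.2 i.1) := by
  obtain ⟨a, b⟩ := i
  have hab := mem_genIndex.1 hi
  simp only [NearIdentity, Prod.mk.injEq] at hab hnear ⊢
  obtain hlt | hgt : a + 1 < b ∨ b + 1 < a := by omega
  · exact Or.inl ⟨hlt, generator_xi hlt⟩
  · exact Or.inr ⟨hgt, by omega, generator_gamma (by omega) (by rw [ne_eq, Prod.mk.injEq]; omega)⟩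

theorem generator_mem_block (hi : i ∈ genIndex n) : generator n i ∈ block n i := by
  unfold block
  split_ifs
  · rfl
  · exact ⟨generator_mem_PORD hi, fun _ _ => id⟩

theorem isPrimeIn_block (hn : 3 ≤ n) (hi : i ∈ genIndex n) :
    IsPrimeIn (PORD n) (block n i) := by
  have hi' := mem_genIndex.1 hi
  unfold block
  split_ifs with hnear
  · refine (undecomposable_of_forall_ne_fixed (b := i.2) fun x h1 hxn hx => ?_).isPrimeIn_singleton
    exact (generator_eq_some_iff_of_nearIdentity hn hi hnear).2 ⟨h1, hxn, Or.inl ⟨rfl, Or.inl hx⟩⟩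
  · rcases generator_cases_of_not_nearIdentity hi hnear with ⟨hlt, hxi⟩ | ⟨hlt, -, hgamma⟩
    · rw [hxi]
      exact isPrimeIn_extends_xi (by omega)
    · rw [hgamma]
      exact isPrimeIn_extends_gamma hi'.2.2.1 (by omega) hi'.2.1

theorem exists_drop_of_not_nearIdentity (hi : i ∈ genIndex n) (hnear : ¬ NearIdentity n i)
    (hf : Extends f (generator n i)) : ∃ x y, f x = some y ∧ y + 2 ≤ x := by
  have hi' := mem_genIndex.1 hi
  rcases generator_cases_of_not_nearIdentity hi hnear with ⟨hlt, hxi⟩ | ⟨hlt, hne, hgamma⟩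
  · rw [hxi, extends_xi_iff (by omega)] at hf
    exact ⟨_, _, hf.1, hlt⟩
  · rw [hgamma] at hf
    rcases exists_drop_of_extends_gamma hi'.2.2.1 hlt hi'.2.1 hne hf with ⟨h1, hdrop⟩ | hdrop
    · exact ⟨_, _, hdrop, by omega⟩
    · exact ⟨_, _, hdrop, by omega⟩

theorem eq_of_generator_eq_of_nearIdentity (hn : 3 ≤ n) (hi : i ∈ genIndex n)
    (hj : j ∈ genIndex n) (hnear : NearIdentity n i) (hnear' : NearIdentity n j)
    (h : generator n i = generator n j) : i = j := by
  have heq (x y : ℕ) : generator n i x = some y ↔ generator n j x = some y := by rw [h]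
  simp only [generator_eq_some_iff_of_nearIdentity hn hi hnear,
    generator_eq_some_iff_of_nearIdentity hn hj hnear'] at heq
  have hi' := mem_genIndex.1 hi
  have hj' := mem_genIndex.1 hj
  have h1 := heq i.2 i.2
  have h2 := heq j.2 j.2
  have h3 := heq i.2 i.1
  have h4 := heq j.2 j.1
  simp only [NearIdentity, Prod.ext_iff, true_and, and_true] at h1 h2 h3 h4 hnear hnear' ⊢
  omega

theorem fixSet_of_mem_block (hi : i ∈ genIndex n) (hnear : ¬ NearIdentity n i)
    (hf : f ∈ block n i) : fixSet f = if i.1 < i.2 then Set.Ico i.1 i.2 else {i.1, i.2} := by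
  rw [block, if_neg hnear] at hf
  have hi' := mem_genIndex.1 hi
  rcases generator_cases_of_not_nearIdentity hi hnear with ⟨hlt, hxi⟩ | ⟨hlt, hne, hgamma⟩
  · rw [if_pos (by omega)]
    exact fixSet_of_extends_xi hf.1 hlt (hxi ▸ hf.2)
  · rw [if_neg (by omega)]
    exact fixSet_of_extends_gamma hf.1 hi'.2.2.1 hlt hi'.2.1 hne (hgamma ▸ hf.2)

theorem eq_of_ite_Ico_pair_eq {c d : ℕ} (hab : a + 1 < b ∨ b + 1 < a) (hcd : c + 1 < d ∨ d + 1 < c)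
    (h : (if a < b then Set.Ico a b else {a, b}) = if c < d then Set.Ico c d else {c, d}) :
    a = c ∧ b = d := by
  rw [Set.ext_iff] at h
  split_ifs at h with h₁ h₂ h₂ <;>
    simp only [Set.mem_Ico, Set.mem_insert_iff, Set.mem_singleton_iff] at h
  · exact (Set.Ico_eq_Ico_iff (Or.inl h₁)).1 (Set.ext h)
  · have := h a
    have := h (a + 1)
    omega
  · have := h c
    have := h (c + 1)
    omega
  · have := h a
    have := h b
    omega

theorem pairwiseDisjoint_block (hn : 3 ≤ n) :
    (genIndex n : Set (ℕ × ℕ)).PairwiseDisjoint (block n) := by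
  intro i hi j hj
  contrapose
  rw [Function.onFun, Set.not_disjoint_iff]
  rintro ⟨f, hfi, hfj⟩
  have no_drop {i : ℕ × ℕ} (hi : i ∈ genIndex n) (hnear : NearIdentity n i) (hf : f ∈ block n i) :
      ¬ ∃ x y, f x = some y ∧ y + 2 ≤ x := by
    rintro ⟨x, y, hxy, hlt⟩
    rw [block, if_pos hnear] at hf
    obtain rfl := hf
    rw [generator_eq_some_iff_of_nearIdentity hn hi hnear] at hxy
    omega
  have drop {i : ℕ × ℕ} (hi : i ∈ genIndex n) (hnear : ¬ NearIdentity n i) (hf : f ∈ block n i) :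
      ∃ x y, f x = some y ∧ y + 2 ≤ x := by
    rw [block, if_neg hnear] at hf
    exact exists_drop_of_not_nearIdentity hi hnear hf.2
  by_cases hnear : NearIdentity n i <;> by_cases hnear' : NearIdentity n j
  · rw [block, if_pos hnear] at hfi
    rw [block, if_pos hnear'] at hfj
    exact eq_of_generator_eq_of_nearIdentity hn hi hj hnear hnear' (hfi.symm.trans hfj)
  · exact absurd (drop hj hnear' hfj) (no_drop hi hnear hfi)
  · exact absurd (drop hi hnear hfi) (no_drop hj hnear' hfj)
  · have hfix := (fixSet_of_mem_block hi hnear hfi).symm.trans (fixSet_of_mem_block hj hnear' hfj)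
    have hi' := generator_cases_of_not_nearIdentity hi hnear
    have hj' := generator_cases_of_not_nearIdentity hj hnear'
    exact Prod.ext_iff.2 <| eq_of_ite_Ico_pair_eq (hi'.imp And.left And.left)
      (hj'.imp And.left And.left) hfix

end PrimeBlocks

theorem rank_PORD_general {n : ℕ} (hn : 3 ≤ n) : rank (PORD n) = n ^ 2 - n + 1 := by
  rw [rank_eq_card (finite_PORD n) (isGenSet_generator hn) (B := block n)
    (fun i hi => generator_mem_block hi) (fun i hi => isPrimeIn_block hn hi)
    (pairwiseDisjoint_block hn), card_genIndex (by omega)]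

end OrientedPT

open OrientedPT in
/-- For `n ≥ 4`, `rank(PORD_n) = n² − n + 1`. -/
theorem rank_PORD (n : ℕ) (hn : 4 ≤ n) :
    rank (PORD n) = n ^ 2 - n + 1 := by
  exact rank_PORD_general (by omega)
end

section
/- Let n ≥ 4, 3 ≤ r < n − ⌊n/3⌋, 1 ≤ p ≤ n−2, and p+2 ≤ q ≤ n. For each 1 ≤ s ≤ min{p, q−p, r−1}, if min{r−s, q−p, n−q+1} = r−s, then γ_{p,q}^{r,s} is undecomposable in IORD(n,r). -/
/-!
The rank bound forces any factorization `γ = αβ` of `γ = γ_{p,q}^{r,s}` to satisfy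
`dom α = dom γ`, and `xγ ≤ xα ≤ x` because both factors are order-decreasing. So `α` is squeezed
between the reflection of each block of `dom γ` in its left endpoint and the identity; in
particular it fixes `p` and `q`. The step from the end of the first block to `q` is then a cyclic
ascent of `α`, and the return from the last point to `p` is a cyclic descent. If `α` is
orientation-reversing, it has no other ascent, so it is strictly decreasing on each block and must
be `γ`. If `α` is orientation-preserving, it is strictly increasing on each block, so it is the
identity on `dom γ`, and `β = γ`.
-/

namespace OrientedPT

theorem apply_add_le_of_strictMonoOn_Ico {g : ℕ → ℕ} {a b x : ℕ}
    (hg : StrictMonoOn g (Set.Ico a b)) (hx : x ∈ Set.Ico a b) : g a + x ≤ g x + a := by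
  obtain ⟨hax, hxb⟩ := hx
  induction x, hax using Nat.le_induction with
  | base => exact le_rfl
  | succ x hax ih =>
    have hlt : g x < g (x + 1) := hg ⟨hax, by omega⟩ ⟨by omega, hxb⟩ x.lt_succ_self
    have := ih (by omega)
    omega

theorem apply_add_le_of_strictAntiOn_Ico {g : ℕ → ℕ} {a b x : ℕ}
    (hg : StrictAntiOn g (Set.Ico a b)) (hx : x ∈ Set.Ico a b) : g x + x ≤ g a + a := by
  obtain ⟨hax, hxb⟩ := hx
  induction x, hax using Nat.le_induction with
  | base => exact le_rfl
  | succ x hax ih =>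
    have hlt : g (x + 1) < g x := hg ⟨hax, by omega⟩ ⟨by omega, hxb⟩ x.lt_succ_self
    have := ih (by omega)
    omega

section PartialTransformations

variable {f g : PTrans} {x : ℕ}

theorem apply_eq_some_val (hx : x ∈ domSet f) : f x = some (val f x) := by
  obtain ⟨y, hy⟩ := Option.ne_none_iff_exists'.mp hx
  simp [val, hy]

theorem ext_val (hdom : domSet f = domSet g) (hval : ∀ x ∈ domSet f, val f x = val g x) :
    f = g := by
  funext x
  by_cases hx : x ∈ domSet f
  · rw [apply_eq_some_val hx, hval x hx, ← apply_eq_some_val (hdom ▸ hx)]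
  · rw [not_not.mp hx, not_not.mp (hdom ▸ hx : x ∉ domSet g)]

theorem OrderDecr.val_le (hf : OrderDecr f) (hx : x ∈ domSet f) : val f x ≤ x :=
  hf x _ (apply_eq_some_val hx)

theorem Inj.injOn_val (hf : Inj f) : Set.InjOn (val f) (domSet f) := fun x hx y hy hxy =>
  hf x y _ (apply_eq_some_val hx) (hxy ▸ apply_eq_some_val hy)

theorem image_val_domSet (f : PTrans) : val f '' domSet f = im f := by
  ext y
  constructor
  · rintro ⟨x, hx, rfl⟩
    exact ⟨x, apply_eq_some_val hx⟩
  · rintro ⟨x, hxy⟩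
    exact ⟨x, by simp [domSet, hxy], by simp [val, hxy]⟩

theorem Inj.ncard_domSet (hf : Inj f) : (domSet f).ncard = (im f).ncard := by
  rw [← image_val_domSet, hf.injOn_val.ncard_image]

theorem domSet_mul_subset (f g : PTrans) : domSet (f * g) ⊆ domSet f := fun _ hx hnone =>
  hx (congrArg (Option.bind · g) hnone)

theorem mul_apply_of_mem_domSet (hx : x ∈ domSet f) : (f * g) x = g (val f x) :=
  congrArg (Option.bind · g) (apply_eq_some_val hx)

theorem OrderDecr.val_mul_le (hg : OrderDecr g) (hx : x ∈ domSet (f * g)) :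
    val (f * g) x ≤ val f x :=
  hg _ _ <| (mul_apply_of_mem_domSet (domSet_mul_subset f g hx)).symm.trans (apply_eq_some_val hx)

end PartialTransformations

section BoundedRank

variable {n r : ℕ} {f g : PTrans}

theorem domSet_eq_of_subset {D : Set ℕ} (hf : f ∈ IORDr n r) (hD : D ⊆ domSet f)
    (hr : r ≤ D.ncard) : domSet f = D := by
  obtain ⟨⟨⟨⟨hdom, -⟩, -⟩, hinj⟩, hrank⟩ := hf
  have hle : (domSet f).ncard ≤ D.ncard := by
    rw [hinj.ncard_domSet]
    exact hrank.trans hr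
  exact (Set.eq_of_subset_of_ncard_le hD hle ((Set.finite_Icc 1 n).subset hdom)).symm

theorem mul_eq_right_of_val_eq_self (hg : g ∈ IORDr n r) (hr : r ≤ (domSet (f * g)).ncard)
    (hf : ∀ x ∈ domSet (f * g), val f x = x) : f * g = g := by
  have happly : ∀ x ∈ domSet (f * g), (f * g) x = g x := fun x hx => by
    rw [mul_apply_of_mem_domSet (domSet_mul_subset f g hx), hf x hx]
  have hdom : domSet g = domSet (f * g) :=
    domSet_eq_of_subset hg (fun x hx hnone => hx ((happly x hx).trans hnone)) hr
  exact ext_val hdom.symm fun x hx => by rw [val, happly x hx, val]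

end BoundedRank

section Orientation

theorem cycSucc_eq_of_lt {D : Set ℕ} {a b : ℕ} (hb : b ∈ D) (hab : a < b)
    (hmin : ∀ x ∈ D, a < x → b ≤ x) : cycSucc D a = b := by
  rw [cycSucc, if_pos ⟨b, hb, hab⟩]
  exact IsLeast.csInf_eq ⟨⟨hb, hab⟩, fun x hx => hmin x hx.1 hx.2⟩

theorem cycSucc_eq_of_isGreatest {D : Set ℕ} {a b : ℕ} (ha : IsGreatest D a) (hb : IsLeast D b) :
    cycSucc D a = b := by
  rw [cycSucc, if_neg, hb.csInf_eq]
  rintro ⟨x, hx, hax⟩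
  exact (ha.2 hx).not_gt hax

theorem cycSucc_eq_add_one {D : Set ℕ} {a : ℕ} (ha : a + 1 ∈ D) : cycSucc D a = a + 1 :=
  cycSucc_eq_of_lt ha a.lt_succ_self fun _ _ h => h

variable {f : PTrans} {m a b : ℕ}

theorem OrientRev.strictAntiOn_val (hrev : OrientRev f) (hinj : Inj f) (hfin : (domSet f).Finite)
    (hm : m ∈ ascents f) (hab : Set.Ico a b ⊆ domSet f) (hmab : m < a ∨ b ≤ m + 1) :
    StrictAntiOn (val f) (Set.Ico a b) := by
  refine strictAntiOn_of_add_one_lt Set.ordConnected_Ico fun x _ hx hx' => ?_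
  have hnot : x ∉ ascents f := fun h => by
    have : x = m := (Set.ncard_le_one (hfin.subset fun _ h => h.1)).mp hrev x h m hm
    have := hx.1
    have := hx'.2
    omega
  have hle : val f (x + 1) ≤ val f x := not_lt.mp fun hlt =>
    hnot ⟨hab hx, (cycSucc_eq_add_one (hab hx')).symm ▸ hlt⟩
  exact hle.lt_of_ne fun h => x.succ_ne_self (hinj.injOn_val (hab hx') (hab hx) h)

theorem OrientPres.strictMonoOn_val (hpres : OrientPres f) (hinj : Inj f)
    (hfin : (domSet f).Finite) (hm : m ∈ descents f) (hab : Set.Ico a b ⊆ domSet f)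
    (hmab : m < a ∨ b ≤ m + 1) : StrictMonoOn (val f) (Set.Ico a b) := by
  refine strictMonoOn_of_lt_add_one Set.ordConnected_Ico fun x _ hx hx' => ?_
  have hnot : x ∉ descents f := fun h => by
    have : x = m := (Set.ncard_le_one (hfin.subset fun _ h => h.1)).mp hpres x h m hm
    have := hx.1
    have := hx'.2
    omega
  have hle : val f x ≤ val f (x + 1) := not_lt.mp fun hlt =>
    hnot ⟨hab hx, (cycSucc_eq_add_one (hab hx')).symm ▸ hlt⟩
  exact hle.lt_of_ne fun h => x.succ_ne_self (hinj.injOn_val (hab hx) (hab hx') h).symm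

end Orientation

/-- `f` has domain `[p, p+s−1] ∪ [q, q+u−1]` and maps `p+i ↦ p−i` and `q+j ↦ q−j`: the shape of
`γ_{p,q}^{r,s}`, freed from its parameters `n` and `r`. The values are given by `xf + x = 2p` and
`xf + x = 2q`, which avoids truncated subtraction. -/
structure IsBlockReflection (f : PTrans) (p q s u : ℕ) : Prop where
  domSet_eq : domSet f = Set.Ico p (p + s) ∪ Set.Ico q (q + u)
  val_add_left : ∀ x ∈ Set.Ico p (p + s), val f x + x = 2 * p
  val_add_right : ∀ x ∈ Set.Ico q (q + u), val f x + x = 2 * q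

theorem isBlockReflection_gammaRS {n r p q s : ℕ} (hsp : s ≤ p) (hsq : p + s ≤ q) :
    IsBlockReflection (gammaRS n r p q s) p q s (min (r - s) (min (q - p) (n - q + 1))) where
  domSet_eq := by
    ext x
    simp only [domSet, gammaRS, Set.mem_ofPred_eq, Set.mem_union, Set.mem_Ico]
    split_ifs <;> simp only [ne_eq, reduceCtorEq, not_true, not_false_iff, true_iff, false_iff] <;>
      omega
  val_add_left := by
    rintro x ⟨hpx, hxs⟩
    rw [val, gammaRS, if_pos (by omega), Option.getD_some]
    omega
  val_add_right := by
    rintro x ⟨hqx, hxu⟩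
    rw [val, gammaRS, if_neg (by omega), if_pos (by omega), Option.getD_some]
    omega

namespace IsBlockReflection

variable {f γ : PTrans} {p q s u : ℕ}

theorem mem_domSet_iff (hγ : IsBlockReflection γ p q s u) {x : ℕ} :
    x ∈ domSet γ ↔ p ≤ x ∧ x < p + s ∨ q ≤ x ∧ x < q + u := by
  rw [hγ.domSet_eq]
  rfl

theorem Ico_left_subset (hγ : IsBlockReflection γ p q s u) : Set.Ico p (p + s) ⊆ domSet γ :=
  hγ.domSet_eq ▸ Set.subset_union_left

theorem Ico_right_subset (hγ : IsBlockReflection γ p q s u) : Set.Ico q (q + u) ⊆ domSet γ :=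
  hγ.domSet_eq ▸ Set.subset_union_right

theorem finite_domSet (hγ : IsBlockReflection γ p q s u) : (domSet γ).Finite :=
  hγ.domSet_eq ▸ (Set.finite_Ico _ _).union (Set.finite_Ico _ _)

theorem ncard_domSet (hγ : IsBlockReflection γ p q s u) (hsq : p + s ≤ q) :
    (domSet γ).ncard = s + u := by
  have hdisj : Disjoint (Set.Ico p (p + s)) (Set.Ico q (q + u)) :=
    Set.disjoint_left.mpr fun x hx hx' => (hx.2.trans_le hsq).not_ge hx'.1
  rw [hγ.domSet_eq, Set.ncard_union_eq hdisj (Set.finite_Ico _ _) (Set.finite_Ico _ _)]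
  simp [Set.ncard_eq_toFinset_card']

theorem mem_ascents (hγ : IsBlockReflection γ p q s u) (hs : 0 < s) (hu : 0 < u)
    (hsq : p + s ≤ q) (hdom : domSet f = domSet γ) (hdecr : OrderDecr f)
    (hle : ∀ x ∈ domSet γ, val γ x ≤ val f x) : p + s - 1 ∈ ascents f := by
  have hend : p + s - 1 ∈ domSet γ := hγ.mem_domSet_iff.mpr (by omega)
  have hq : q ∈ domSet γ := hγ.mem_domSet_iff.mpr (by omega)
  have hsucc : cycSucc (domSet γ) (p + s - 1) = q :=
    cycSucc_eq_of_lt hq (by omega) fun x hx _ => by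
      have := hγ.mem_domSet_iff.mp hx
      omega
  refine ⟨hdom ▸ hend, ?_⟩
  rw [hdom, hsucc]
  have hval_end : val f (p + s - 1) ≤ p + s - 1 := hdecr.val_le (hdom ▸ hend)
  have hval_q : val γ q + q = 2 * q := hγ.val_add_right q ⟨le_rfl, by omega⟩
  have := hle q hq
  omega

theorem mem_descents (hγ : IsBlockReflection γ p q s u) (hs : 0 < s) (hu : 0 < u)
    (hsq : p + s ≤ q) (huq : p + u ≤ q) (hdom : domSet f = domSet γ) (hdecr : OrderDecr f)
    (hle : ∀ x ∈ domSet γ, val γ x ≤ val f x) : q + u - 1 ∈ descents f := by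
  have hend : q + u - 1 ∈ domSet γ := hγ.mem_domSet_iff.mpr (by omega)
  have hp : p ∈ domSet γ := hγ.mem_domSet_iff.mpr (by omega)
  have hsucc : cycSucc (domSet γ) (q + u - 1) = p :=
    cycSucc_eq_of_isGreatest
      ⟨hend, fun x hx => by have := hγ.mem_domSet_iff.mp hx; omega⟩
      ⟨hp, fun x hx => by have := hγ.mem_domSet_iff.mp hx; omega⟩
  refine ⟨hdom ▸ hend, ?_⟩
  rw [hdom, hsucc]
  have hval_p : val f p ≤ p := hdecr.val_le (hdom ▸ hp)
  have hval_end : val γ (q + u - 1) + (q + u - 1) = 2 * q :=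
    hγ.val_add_right _ ⟨by omega, by omega⟩
  have := hle _ hend
  omega

theorem eq_of_orientRev (hγ : IsBlockReflection γ p q s u) (hs : 0 < s) (hu : 0 < u)
    (hsq : p + s ≤ q) (hdom : domSet f = domSet γ) (hinj : Inj f) (hdecr : OrderDecr f)
    (hle : ∀ x ∈ domSet γ, val γ x ≤ val f x) (hrev : OrientRev f) : f = γ := by
  have hasc := hγ.mem_ascents hs hu hsq hdom hdecr hle
  have hfin : (domSet f).Finite := hdom ▸ hγ.finite_domSet
  have hanti : ∀ {a b}, Set.Ico a b ⊆ domSet γ → p + s - 1 < a ∨ b ≤ p + s - 1 + 1 →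
      StrictAntiOn (val f) (Set.Ico a b) := fun hab =>
    hrev.strictAntiOn_val hinj hfin hasc (hdom ▸ hab)
  refine ext_val hdom fun x hx => le_antisymm ?_ (hle x (hdom ▸ hx))
  rcases hγ.mem_domSet_iff.mp (hdom ▸ hx) with hx | hx
  · have hfp : val f p ≤ p := hdecr.val_le (hdom ▸ hγ.Ico_left_subset ⟨le_rfl, by omega⟩)
    have hfx := apply_add_le_of_strictAntiOn_Ico (hanti hγ.Ico_left_subset (by omega)) hx
    have := hγ.val_add_left x hx
    omega
  · have hfq : val f q ≤ q := hdecr.val_le (hdom ▸ hγ.Ico_right_subset ⟨le_rfl, by omega⟩)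
    have hfx := apply_add_le_of_strictAntiOn_Ico (hanti hγ.Ico_right_subset (by omega)) hx
    have := hγ.val_add_right x hx
    omega

theorem val_eq_self_of_orientPres (hγ : IsBlockReflection γ p q s u) (hs : 0 < s) (hu : 0 < u)
    (hsq : p + s ≤ q) (huq : p + u ≤ q) (hdom : domSet f = domSet γ) (hinj : Inj f)
    (hdecr : OrderDecr f) (hle : ∀ x ∈ domSet γ, val γ x ≤ val f x) (hpres : OrientPres f) :
    ∀ x ∈ domSet γ, val f x = x := by
  have hdesc := hγ.mem_descents hs hu hsq huq hdom hdecr hle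
  have hfin : (domSet f).Finite := hdom ▸ hγ.finite_domSet
  have hmono : ∀ {a b}, Set.Ico a b ⊆ domSet γ → q + u - 1 < a ∨ b ≤ q + u - 1 + 1 →
      StrictMonoOn (val f) (Set.Ico a b) := fun hab =>
    hpres.strictMonoOn_val hinj hfin hdesc (hdom ▸ hab)
  refine fun x hx => le_antisymm (hdecr.val_le (hdom ▸ hx)) ?_
  rcases hγ.mem_domSet_iff.mp hx with hx | hx
  · have hfx := apply_add_le_of_strictMonoOn_Ico (hmono hγ.Ico_left_subset (by omega)) hx
    have hγp : val γ p + p = 2 * p := hγ.val_add_left p ⟨le_rfl, by omega⟩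
    have := hle p (hγ.Ico_left_subset ⟨le_rfl, by omega⟩)
    omega
  · have hfx := apply_add_le_of_strictMonoOn_Ico (hmono hγ.Ico_right_subset (by omega)) hx
    have hγq : val γ q + q = 2 * q := hγ.val_add_right q ⟨le_rfl, by omega⟩
    have := hle q (hγ.Ico_right_subset ⟨le_rfl, by omega⟩)
    omega

theorem undecomposable (hγ : IsBlockReflection γ p q s u) (hs : 0 < s) (hu : 0 < u)
    (hsq : p + s ≤ q) (huq : p + u ≤ q) (n : ℕ) : Undecomposable (IORDr n (s + u)) γ := by
  rintro α hα β hβ rfl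
  have hrank : s + u ≤ (domSet (α * β)).ncard := (hγ.ncard_domSet hsq).ge
  have hdom : domSet α = domSet (α * β) :=
    domSet_eq_of_subset hα (domSet_mul_subset α β) hrank
  have hle : ∀ x ∈ domSet (α * β), val (α * β) x ≤ val α x := fun x hx =>
    OrderDecr.val_mul_le hβ.1.1.2.2 hx
  obtain ⟨⟨⟨-, hpres | hrev, hdecr⟩, hinj⟩, -⟩ := hα
  · exact .inr <| mul_eq_right_of_val_eq_self hβ hrank <|
      hγ.val_eq_self_of_orientPres hs hu hsq huq hdom hinj hdecr hle hpres
  · exact .inl (hγ.eq_of_orientRev hs hu hsq hdom hinj hdecr hle hrev).symm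

end IsBlockReflection

end OrientedPT

open OrientedPT in
theorem gammaRS_undecomposable_general {n r p q s : ℕ} (hs : 1 ≤ s) (hsp : s ≤ p)
    (hsq : p + s ≤ q) (hsr : s < r) (hrq : p + r ≤ q + s) (hrn : q + r ≤ n + 1 + s) :
    Undecomposable (IORDr n r) (gammaRS n r p q s) := by
  have hγ : IsBlockReflection (gammaRS n r p q s) p q s (r - s) := by
    have hmin : min (r - s) (min (q - p) (n - q + 1)) = r - s := by omega
    exact hmin ▸ isBlockReflection_gammaRS (n := n) (r := r) hsp hsq
  have hr : s + (r - s) = r := Nat.add_sub_of_le hsr.le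
  simpa only [hr] using hγ.undecomposable hs (Nat.sub_pos_of_lt hsr) hsq (by omega) n

open OrientedPT in
/-- For `n ≥ 4`, `3 ≤ r < n − ⌊n/3⌋`, `1 ≤ p ≤ n−2`,
`p+2 ≤ q ≤ n` and `1 ≤ s ≤ min{p, q−p, r−1}`: if
`min{r−s, q−p, n−q+1} = r−s`, then `γ_{p,q}^{r,s}` is undecomposable in
`IORD(n,r)`. -/
theorem gammaRS_undecomposable (n r p q s : ℕ) (hn : 4 ≤ n) (hr1 : 3 ≤ r)
    (hr2 : r < n - n / 3) (hp : 1 ≤ p) (hpn : p + 2 ≤ n) (hq1 : p + 2 ≤ q)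
    (hq2 : q ≤ n) (hs1 : 1 ≤ s) (hs2 : s ≤ min p (min (q - p) (r - 1)))
    (hmin : min (r - s) (min (q - p) (n - q + 1)) = r - s) :
    Undecomposable (IORDr n r) (gammaRS n r p q s) := by
  exact gammaRS_undecomposable_general hs1 (by omega) (by omega) (by omega) (by omega) (by omega)
end
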